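/- arXiv:1006.4762 — 3 statements merged into one kernel-verified Lean document; each statement's English description precedes it below -/
import Mathlib

section
/- Let K be a field, n ≥ 1, and G ⊆ GL_n(K) a finite subgroup that is *-stable, i.e., stable under the automorphism σ ↦ σ* := J·(σ^{-1})^T·J of GL_n(K), where J is the antidiagonal permutation matrix. Assume the invariant ring K[x_1,…,x_n]^G is generated as a K-algebra by elements f_1,…,f_m. Then the invariant field K(V ⊕ V*)^G is generated as a field extension of K by f_1,…,f_m, f_1*,…,f_m*, and u_0, where * denotes the K-algebra involution of K[x_1,…,x_n,y_1,…,y_n] with x_i ↦ y_{n+1−i} and y_i ↦ x_{n+1−i}, and u_0 := Σ_{j=1}^n x_j y_j. -/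
open MvPolynomial Matrix

variable (K : Type) [Field K] (n : ℕ)

noncomputable def gact (σ : GL (Fin n) K) :
    MvPolynomial (Fin n ⊕ Fin n) K →ₐ[K] MvPolynomial (Fin n ⊕ Fin n) K :=
  aeval (Sum.elim
    (fun j => ∑ i : Fin n, C ((σ : Matrix (Fin n) (Fin n) K) i j) * X (Sum.inl i))
    (fun j => ∑ i : Fin n,
      C (((σ⁻¹ : GL (Fin n) K) : Matrix (Fin n) (Fin n) K) j i) * X (Sum.inr i)))

lemma gact_comp (σ τ : GL (Fin n) K) :
    (gact K n σ).comp (gact K n τ) = gact K n (σ * τ) := by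
  apply algHom_ext
  rintro (j | j)
  · simp only [gact, AlgHom.comp_apply, aeval_X, Sum.elim_inl, map_sum, _root_.map_mul,
      aeval_C, algebraMap_eq]
    rw [Units.val_mul]
    simp only [Matrix.mul_apply, map_sum, _root_.map_mul, Finset.sum_mul, Finset.mul_sum]
    rw [Finset.sum_comm]
    refine Finset.sum_congr rfl fun i _ => Finset.sum_congr rfl fun i' _ => ?_
    ring
  · simp only [gact, AlgHom.comp_apply, aeval_X, Sum.elim_inr, map_sum, _root_.map_mul,
      aeval_C, algebraMap_eq]
    rw [_root_.mul_inv_rev, Units.val_mul]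
    simp only [Matrix.mul_apply, map_sum, _root_.map_mul, Finset.sum_mul, Finset.mul_sum]
    rw [Finset.sum_comm]
    refine Finset.sum_congr rfl fun i _ => Finset.sum_congr rfl fun i' _ => ?_
    ring

lemma gact_one : gact K n 1 = AlgHom.id K _ := by
  apply algHom_ext
  rintro (j | j) <;>
    simp [gact, Matrix.one_apply, apply_ite (C : K → MvPolynomial (Fin n ⊕ Fin n) K),
      Finset.sum_ite_eq]

noncomputable def gactEquiv (σ : GL (Fin n) K) :
    MvPolynomial (Fin n ⊕ Fin n) K ≃ₐ[K] MvPolynomial (Fin n ⊕ Fin n) K :=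
  AlgEquiv.ofAlgHom (gact K n σ) (gact K n σ⁻¹)
    (by rw [gact_comp, mul_inv_cancel, gact_one])
    (by rw [gact_comp, inv_mul_cancel, gact_one])

noncomputable def gactFrac (σ : GL (Fin n) K) :
    FractionRing (MvPolynomial (Fin n ⊕ Fin n) K) ≃ₐ[K]
      FractionRing (MvPolynomial (Fin n ⊕ Fin n) K) :=
  IsFractionRing.algEquivOfAlgEquiv (gactEquiv K n σ)

/-- The antidiagonal permutation matrix `J`. -/
def antidiagJ : Matrix (Fin n) (Fin n) K :=
  Matrix.of fun i j => if j = i.rev then 1 else 0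

/-- The involution `*` of `K[V ⊕ V*]`: `x_i ↦ y_{n+1-i}`, `y_i ↦ x_{n+1-i}`. -/
noncomputable def starInvol :
    MvPolynomial (Fin n ⊕ Fin n) K →ₐ[K] MvPolynomial (Fin n ⊕ Fin n) K :=
  rename (Sum.elim (fun i : Fin n => Sum.inr i.rev) (fun i : Fin n => Sum.inl i.rev))

/-!
Let `GL_n × GL_n` act on `K(V ⊕ V*)`, the first factor moving the `x_j` and the second the `y_j`.
The sum of the `G×G`-translates of `a(x) b(y)` is the sum of the `G`-translates of `a` times that
of `b`, so `K[x]^G` and `K[y]^G` generate a ring containing the `G×G`-trace of every polynomial.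
By Dedekind's independence of characters, every element fixed by `G×G` is a quotient of two such
traces. Hence a field containing `K[x]^G` and `K[y]^G` contains the fixed field of `G×G`, and by
Artin's theorem it is the fixed field of a subgroup of `G×G`. If it also contains `u_0`, this
subgroup lies in the stabilizer of `u_0`, which is the diagonal copy of `G`. For `*`-stable `G`,
the involution `*` interchanges `K[x]^G` and `K[y]^G`.
-/

section FixedFields

variable {K L : Type*} [Field K] [Field L] [Algebra K L]

theorem fixedField_fixingSubgroup_inf_le (H : Subgroup (L ≃ₐ[K] L)) [Finite H]
    {F : IntermediateField K L} (hF : IntermediateField.fixedField H ≤ F) :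
    IntermediateField.fixedField (F.fixingSubgroup ⊓ H) ≤ F := by
  intro z hz
  have : FiniteDimensional (IntermediateField.fixedField H) L :=
    inferInstanceAs (FiniteDimensional (FixedPoints.subfield H L) L)
  have : IsGalois (IntermediateField.fixedField H) L := IsGalois.of_fixed_field L H
  rw [← IntermediateField.mem_extendScalars hF,
    ← IsGalois.fixedField_fixingSubgroup (IntermediateField.extendScalars hF),
    IntermediateField.mem_fixedField_iff]
  intro φ hφ
  obtain ⟨h, rfl⟩ := FixedPoints.toAlgAut_surjective H L φ
  exact (IntermediateField.mem_fixedField_iff _ z).1 hz h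
    ⟨fun x ↦ hφ x, h.2⟩

theorem exists_sum_algebraMap_mul_ne_zero (R : Type*) [CommRing R] [Algebra R L]
    [IsFractionRing R L] {ι : Type*} [Fintype ι] [Nonempty ι] {φ : ι → L →+* L}
    (hφ : Function.Injective φ) {q : R} (hq : algebraMap R L q ≠ 0) :
    ∃ c : R, ∑ i, φ i (algebraMap R L (q * c)) ≠ 0 := by
  let χ (i : ι) : R →* L := (φ i).toMonoidHom.comp (algebraMap R L).toMonoidHom
  have hχ : Function.Injective χ := fun i j hij ↦ hφ <|
    IsLocalization.ringHom_ext (nonZeroDivisors R) <| RingHom.ext fun r ↦ DFunLike.congr_fun hij r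
  have hindep := (linearIndependent_monoidHom R L).comp χ hχ
  by_contra! hzero
  obtain ⟨i⟩ := ‹Nonempty ι›
  refine (map_ne_zero (φ i)).2 hq
    (Fintype.linearIndependent_iff.1 hindep (fun i ↦ φ i (algebraMap R L q)) ?_ i)
  ext c
  simpa [χ] using hzero c

theorem mem_of_forall_sum_algebraMap_mem (R : Type*) [CommRing R] [Algebra R L]
    [IsFractionRing R L] {ι : Type*} [Fintype ι] [Nonempty ι] {φ : ι → L →+* L}
    (hφ : Function.Injective φ) {F : Subfield L}
    (hF : ∀ r : R, ∑ i, φ i (algebraMap R L r) ∈ F) {z : L} (hz : ∀ i, φ i z = z) : z ∈ F := by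
  obtain ⟨p, q, hq, rfl⟩ := IsFractionRing.div_surjective (A := R) z
  have hq₀ : algebraMap R L q ≠ 0 := (IsLocalization.map_units L ⟨q, hq⟩).ne_zero
  obtain ⟨c, hc⟩ := exists_sum_algebraMap_mul_ne_zero R hφ hq₀
  have hsum : ∑ i, φ i (algebraMap R L (p * c)) =
      algebraMap R L p / algebraMap R L q * ∑ i, φ i (algebraMap R L (q * c)) := by
    rw [Finset.mul_sum]
    refine Finset.sum_congr rfl fun i _ ↦ ?_
    rw [← hz i, ← map_mul, map_mul _ q, ← mul_assoc, div_mul_cancel₀ _ hq₀, ← map_mul]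
  rw [eq_div_of_mul_eq hc hsum.symm]
  exact div_mem (hF _) (hF _)

end FixedFields

section InvariantField

local notation "K[V⊕V*]" => MvPolynomial (Fin n ⊕ Fin n) K
local notation "K(V⊕V*)" => FractionRing (MvPolynomial (Fin n ⊕ Fin n) K)

variable {K n}

section PairAction

variable (K n) in
/-- The subring `K[x_1,…,x_n]` of `K[V ⊕ V*]`. -/
noncomputable abbrev xPolynomials : Subalgebra K K[V⊕V*] :=
  (rename (R := K) (Sum.inl : Fin n → Fin n ⊕ Fin n)).range

variable (K n) in
/-- The subring `K[y_1,…,y_n]` of `K[V ⊕ V*]`. -/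
noncomputable abbrev yPolynomials : Subalgebra K K[V⊕V*] :=
  (rename (R := K) (Sum.inr : Fin n → Fin n ⊕ Fin n)).range

variable (K n) in
/-- The canonical pairing `u_0 = ∑ x_j y_j`, written as a dot product so that matrices can be moved
across it. -/
noncomputable def pairing : K[V⊕V*] :=
  (fun j ↦ X (Sum.inl j)) ⬝ᵥ (fun j ↦ X (Sum.inr j))

lemma gact_X_inl (σ : GL (Fin n) K) (j : Fin n) :
    gact K n σ (X (Sum.inl j)) =
      ((fun i ↦ X (Sum.inl i)) ᵥ* (σ : Matrix (Fin n) (Fin n) K).map C) j := by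
  simp [gact, vecMul, dotProduct, mul_comm]

lemma gact_X_inr (σ : GL (Fin n) K) (j : Fin n) :
    gact K n σ (X (Sum.inr j)) =
      (((σ⁻¹ : GL (Fin n) K) : Matrix (Fin n) (Fin n) K).map C *ᵥ (fun i ↦ X (Sum.inr i))) j := by
  simp only [gact, aeval_X, Sum.elim_inr, mulVec, dotProduct, map_apply]

lemma gact_mem_xPolynomials (σ : GL (Fin n) K) {p : K[V⊕V*]} (hp : p ∈ xPolynomials K n) :
    gact K n σ p ∈ xPolynomials K n := by
  obtain ⟨p, rfl⟩ := hp
  refine ⟨aeval (fun j ↦ ∑ i, C ((σ : Matrix (Fin n) (Fin n) K) i j) * X i) p, ?_⟩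
  change rename Sum.inl (aeval _ p) = aeval _ (rename Sum.inl p)
  simp only [aeval_rename, comp_aeval_apply, map_sum, _root_.map_mul, rename_C, rename_X,
    Sum.elim_comp_inl]

lemma gact_mem_yPolynomials (σ : GL (Fin n) K) {p : K[V⊕V*]} (hp : p ∈ yPolynomials K n) :
    gact K n σ p ∈ yPolynomials K n := by
  obtain ⟨p, rfl⟩ := hp
  refine ⟨aeval (fun j ↦
    ∑ i, C (((σ⁻¹ : GL (Fin n) K) : Matrix (Fin n) (Fin n) K) j i) * X i) p, ?_⟩
  change rename Sum.inr (aeval _ p) = aeval _ (rename Sum.inr p)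
  simp only [aeval_rename, comp_aeval_apply, map_sum, _root_.map_mul, rename_C, rename_X,
    Sum.elim_comp_inr]

/-- The action of `GL_n × GL_n` on `K[V ⊕ V*]` in which the first factor acts on the `x_j` and the
second on the `y_j`; `gact` is its restriction to the diagonal. -/
noncomputable def pairAct (σ τ : GL (Fin n) K) : K[V⊕V*] →ₐ[K] K[V⊕V*] :=
  aeval (Sum.elim (fun j ↦ gact K n σ (X (Sum.inl j))) (fun j ↦ gact K n τ (X (Sum.inr j))))

lemma pairAct_X_inl (σ τ : GL (Fin n) K) (j : Fin n) :
    pairAct σ τ (X (Sum.inl j)) = gact K n σ (X (Sum.inl j)) := by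
  simp only [pairAct, aeval_X, Sum.elim_inl]

lemma pairAct_X_inr (σ τ : GL (Fin n) K) (j : Fin n) :
    pairAct σ τ (X (Sum.inr j)) = gact K n τ (X (Sum.inr j)) := by
  simp only [pairAct, aeval_X, Sum.elim_inr]

lemma pairAct_of_mem_xPolynomials (σ τ : GL (Fin n) K) {p : K[V⊕V*]}
    (hp : p ∈ xPolynomials K n) : pairAct σ τ p = gact K n σ p := by
  obtain ⟨p, rfl⟩ := hp
  exact DFunLike.congr_fun (f := (pairAct σ τ).comp (rename Sum.inl))
    (g := (gact K n σ).comp (rename Sum.inl))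
    (algHom_ext fun j ↦ by simp [pairAct_X_inl]) p

lemma pairAct_of_mem_yPolynomials (σ τ : GL (Fin n) K) {p : K[V⊕V*]}
    (hp : p ∈ yPolynomials K n) : pairAct σ τ p = gact K n τ p := by
  obtain ⟨p, rfl⟩ := hp
  exact DFunLike.congr_fun (f := (pairAct σ τ).comp (rename Sum.inr))
    (g := (gact K n τ).comp (rename Sum.inr))
    (algHom_ext fun j ↦ by simp [pairAct_X_inr]) p

lemma pairAct_self (σ : GL (Fin n) K) : pairAct σ σ = gact K n σ := by
  apply algHom_ext
  rintro (j | j)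
  · exact pairAct_X_inl σ σ j
  · exact pairAct_X_inr σ σ j

lemma pairAct_comp (σ τ σ' τ' : GL (Fin n) K) :
    (pairAct σ τ).comp (pairAct σ' τ') = pairAct (σ * σ') (τ * τ') := by
  apply algHom_ext
  rintro (j | j)
  · rw [AlgHom.comp_apply, pairAct_X_inl, pairAct_X_inl, ← gact_comp, AlgHom.comp_apply,
      pairAct_of_mem_xPolynomials σ τ (gact_mem_xPolynomials σ' ⟨X j, rename_X _ j⟩)]
  · rw [AlgHom.comp_apply, pairAct_X_inr, pairAct_X_inr, ← gact_comp, AlgHom.comp_apply,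
      pairAct_of_mem_yPolynomials σ τ (gact_mem_yPolynomials τ' ⟨X j, rename_X _ j⟩)]

lemma pairAct_pairing (σ τ : GL (Fin n) K) :
    pairAct σ τ (pairing K n) =
      (fun i ↦ X (Sum.inl i)) ⬝ᵥ
        (((σ * τ⁻¹ : GL (Fin n) K) : Matrix (Fin n) (Fin n) K).map C *ᵥ
          fun k ↦ X (Sum.inr k)) := by
  rw [Units.val_mul, Matrix.map_mul, ← mulVec_mulVec, dotProduct_mulVec]
  simp only [pairing, dotProduct, map_sum, _root_.map_mul, pairAct_X_inl, pairAct_X_inr,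
    gact_X_inl, gact_X_inr]

lemma pairAct_pairing_eq_iff {σ τ : GL (Fin n) K} :
    pairAct σ τ (pairing K n) = pairing K n ↔ σ = τ := by
  rw [pairAct_pairing]
  refine ⟨fun h ↦ mul_inv_eq_one.1 <| Units.ext <| Matrix.ext fun i k ↦ ?_, ?_⟩
  · have heval := congrArg (eval (Sum.elim (Pi.single i 1) (Pi.single k 1))) h
    simpa [pairing, dotProduct, mulVec, Pi.single_apply, Matrix.one_apply, eq_comm] using heval
  · rintro rfl
    rw [mul_inv_cancel, Units.val_one, Matrix.map_one _ C_0 C_1, one_mulVec, pairing]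

lemma eq_one_of_pairAct_eq_id {σ τ : GL (Fin n) K} (h : pairAct σ τ = AlgHom.id K _) :
    σ = 1 ∧ τ = 1 := by
  have hστ : σ = τ := pairAct_pairing_eq_iff.1 (DFunLike.congr_fun h _)
  have hσ : pairAct σ 1 = AlgHom.id K _ := by
    apply algHom_ext
    rintro (j | j)
    · rw [pairAct_X_inl, ← pairAct_X_inl σ τ, h]
    · rw [pairAct_X_inr, gact_one]
  have hσ_one : σ = 1 := pairAct_pairing_eq_iff.1 (DFunLike.congr_fun hσ _)
  exact ⟨hσ_one, hστ ▸ hσ_one⟩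

/-- The action `pairAct` of `GL_n × GL_n`, extended to `K(V ⊕ V*)`. -/
noncomputable def pairActFrac :
    GL (Fin n) K × GL (Fin n) K →* (K(V⊕V*) ≃ₐ[K] K(V⊕V*)) :=
  (IsFractionRing.fieldEquivOfAlgEquivHom K _).comp <|
    (AlgEquiv.algHomUnitsEquiv K K[V⊕V*]).toMonoidHom.comp <|
      MonoidHom.toHomUnits
        { toFun := fun g ↦ pairAct g.1 g.2
          map_one' := (pairAct_self 1).trans (gact_one K n)
          map_mul' := fun g h ↦ (pairAct_comp g.1 g.2 h.1 h.2).symm }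

lemma pairActFrac_algebraMap (g : GL (Fin n) K × GL (Fin n) K) (p : K[V⊕V*]) :
    pairActFrac g (algebraMap _ _ p) = algebraMap _ _ (pairAct g.1 g.2 p) := by
  simp [pairActFrac]

lemma pairActFrac_injective : Function.Injective (pairActFrac (K := K) (n := n)) := by
  refine (injective_iff_map_eq_one _).2 fun g hg ↦ Prod.ext_iff.2 <|
    eq_one_of_pairAct_eq_id <| AlgHom.ext fun p ↦ ?_
  apply IsFractionRing.injective _ K(V⊕V*)
  rw [← pairActFrac_algebraMap, hg, AlgEquiv.one_apply, AlgHom.id_apply]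

lemma gactFrac_algebraMap (σ : GL (Fin n) K) (p : K[V⊕V*]) :
    gactFrac K n σ (algebraMap _ _ p) = algebraMap _ _ (gact K n σ p) := by
  simp [gactFrac, gactEquiv]

lemma pairActFrac_self (σ : GL (Fin n) K) : pairActFrac (σ, σ) = gactFrac K n σ := by
  have h := IsLocalization.ringHom_ext (nonZeroDivisors K[V⊕V*])
    (j := (pairActFrac (σ, σ)).toRingHom) (k := (gactFrac K n σ).toRingHom) <|
      RingHom.ext fun p ↦ by
        simp [pairActFrac_algebraMap, gactFrac_algebraMap, pairAct_self]
  exact AlgEquiv.ext (RingHom.congr_fun h)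

end PairAction

section Invariants

/-- The invariant ring `K[V ⊕ V*]^G`. -/
noncomputable def invariantRing (G : Subgroup (GL (Fin n) K)) : Subalgebra K K[V⊕V*] :=
  ⨅ σ ∈ G, AlgHom.equalizer (gact K n σ) (AlgHom.id K _)

lemma mem_invariantRing {G : Subgroup (GL (Fin n) K)} {p : K[V⊕V*]} :
    p ∈ invariantRing G ↔ ∀ σ ∈ G, gact K n σ p = p := by
  simp [invariantRing, Algebra.mem_iInf]

/-- The invariant field `K(V ⊕ V*)^G`, as the fixed field of the diagonal copy of `G` in
`GL_n × GL_n`. -/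
noncomputable def invariantField (G : Subgroup (GL (Fin n) K)) :
    IntermediateField K K(V⊕V*) :=
  IntermediateField.fixedField
    (G.map (pairActFrac.comp ((MonoidHom.id _).prod (MonoidHom.id _))))

lemma mem_invariantField {G : Subgroup (GL (Fin n) K)} {z : K(V⊕V*)} :
    z ∈ invariantField G ↔ ∀ σ ∈ G, gactFrac K n σ z = z := by
  simp [invariantField, pairActFrac_self]

lemma algebraMap_mem_invariantField {G : Subgroup (GL (Fin n) K)} {p : K[V⊕V*]}
    (hp : p ∈ invariantRing G) : algebraMap _ _ p ∈ invariantField G :=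
  mem_invariantField.2 fun σ hσ ↦ by rw [gactFrac_algebraMap, mem_invariantRing.1 hp σ hσ]

lemma pairing_mem_invariantRing (G : Subgroup (GL (Fin n) K)) :
    pairing K n ∈ invariantRing G :=
  mem_invariantRing.2 fun σ _ ↦ by rw [← pairAct_self, pairAct_pairing_eq_iff]

lemma sum_gact_mem_invariantRing (G : Subgroup (GL (Fin n) K)) [Fintype G]
    (p : K[V⊕V*]) : ∑ σ : G, gact K n σ p ∈ invariantRing G := by
  refine mem_invariantRing.2 fun τ hτ ↦ ?_
  rw [map_sum]
  refine Fintype.sum_equiv (Equiv.mulLeft ⟨τ, hτ⟩) _ _ fun σ ↦ ?_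
  exact DFunLike.congr_fun (gact_comp K n τ σ) p

lemma productMap_rename_inl_inr_surjective :
    Function.Surjective (Algebra.TensorProduct.productMap
      (rename (R := K) (Sum.inl : Fin n → Fin n ⊕ Fin n)) (rename Sum.inr)) := by
  rw [← AlgHom.range_eq_top, eq_top_iff, ← adjoin_range_X, Algebra.adjoin_le_iff,
    Algebra.TensorProduct.productMap_range]
  rintro _ ⟨j | j, rfl⟩
  · exact Algebra.mem_sup_left ⟨X j, rename_X _ j⟩
  · exact Algebra.mem_sup_right ⟨X j, rename_X _ j⟩

lemma sum_pairAct_mem (G : Subgroup (GL (Fin n) K)) [Fintype G] (p : K[V⊕V*]) :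
    ∑ g : G × G, pairAct (g.1 : GL (Fin n) K) g.2 p ∈
      (xPolynomials K n ⊓ invariantRing G) ⊔ (yPolynomials K n ⊓ invariantRing G) := by
  obtain ⟨t, rfl⟩ := productMap_rename_inl_inr_surjective p
  induction t with
  | zero => simp only [map_zero, Finset.sum_const_zero, zero_mem]
  | add s t hs ht => simpa only [map_add, Finset.sum_add_distrib] using add_mem hs ht
  | tmul a b =>
    have ha : rename Sum.inl a ∈ xPolynomials K n := ⟨a, rfl⟩
    have hb : rename Sum.inr b ∈ yPolynomials K n := ⟨b, rfl⟩
    have hsum_a : ∑ σ : G, gact K n σ (rename Sum.inl a) ∈ xPolynomials K n :=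
      sum_mem fun (σ : G) _ ↦ gact_mem_xPolynomials (σ : GL (Fin n) K) ha
    have hsum_b : ∑ τ : G, gact K n τ (rename Sum.inr b) ∈ yPolynomials K n :=
      sum_mem fun (τ : G) _ ↦ gact_mem_yPolynomials (τ : GL (Fin n) K) hb
    have hfactor :
        ∑ g : G × G, pairAct (g.1 : GL (Fin n) K) g.2 (rename Sum.inl a * rename Sum.inr b) =
          (∑ σ : G, gact K n σ (rename Sum.inl a)) * ∑ τ : G, gact K n τ (rename Sum.inr b) := by
      simp only [_root_.map_mul, pairAct_of_mem_xPolynomials _ _ ha,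
        pairAct_of_mem_yPolynomials _ _ hb, Fintype.sum_prod_type, Fintype.sum_mul_sum]
    rw [Algebra.TensorProduct.productMap_apply_tmul, hfactor]
    exact mul_mem
      (Algebra.mem_sup_left (Algebra.mem_inf.2 ⟨hsum_a, sum_gact_mem_invariantRing G _⟩))
      (Algebra.mem_sup_right (Algebra.mem_inf.2 ⟨hsum_b, sum_gact_mem_invariantRing G _⟩))

/-- The image of `G × G` in the automorphism group of `K(V ⊕ V*)`, acting through `pairActFrac`. -/
noncomputable def productGroup (G : Subgroup (GL (Fin n) K)) : Subgroup (K(V⊕V*) ≃ₐ[K] K(V⊕V*)) :=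
  (pairActFrac.comp (G.subtype.prodMap G.subtype)).range

instance (G : Subgroup (GL (Fin n) K)) [Finite G] : Finite (productGroup G) :=
  Set.finite_range _

theorem fixedField_productGroup_le (G : Subgroup (GL (Fin n) K)) [Finite G]
    {F : IntermediateField K K(V⊕V*)}
    (hF : (xPolynomials K n ⊓ invariantRing G) ⊔ (yPolynomials K n ⊓ invariantRing G) ≤
      F.toSubalgebra.comap (Algebra.algHom K K[V⊕V*] K(V⊕V*))) :
    IntermediateField.fixedField (productGroup G) ≤ F := by
  intro z hz
  have := Fintype.ofFinite G
  let φ (g : G × G) : K(V⊕V*) →+* K(V⊕V*) :=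
    (pairActFrac (g.1.1, g.2.1)).toRingHom
  have hφ : Function.Injective φ := fun g h hgh ↦ by
    simpa [Prod.ext_iff] using
      pairActFrac_injective (AlgEquiv.ext (RingHom.congr_fun hgh))
  have htrace (p : K[V⊕V*]) : ∑ g, φ g (algebraMap K[V⊕V*] K(V⊕V*) p) ∈ F.toSubfield := by
    have hsum : ∑ g, φ g (algebraMap K[V⊕V*] K(V⊕V*) p) = algebraMap K[V⊕V*] K(V⊕V*)
        (∑ g : G × G, pairAct (g.1 : GL (Fin n) K) g.2 p) := by
      rw [map_sum]
      exact Finset.sum_congr rfl fun g _ ↦ pairActFrac_algebraMap (g.1.1, g.2.1) p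
    rw [hsum]
    exact hF (sum_pairAct_mem G p)
  refine mem_of_forall_sum_algebraMap_mem K[V⊕V*] hφ htrace fun g ↦ ?_
  exact (IntermediateField.mem_fixedField_iff _ z).1 hz _ ⟨g, rfl⟩

theorem invariantField_eq_adjoin_of_starStable_general (G : Subgroup (GL (Fin n) K)) [Finite G]
    {s t : Set K[V⊕V*]}
    (hs : Algebra.adjoin K s = xPolynomials K n ⊓ invariantRing G)
    (ht : Algebra.adjoin K t = yPolynomials K n ⊓ invariantRing G) :
    invariantField G = IntermediateField.adjoin K
      (algebraMap K[V⊕V*] K(V⊕V*) '' (s ∪ t ∪ {pairing K n})) := by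
  apply le_antisymm
  · set F := IntermediateField.adjoin K
      (algebraMap K[V⊕V*] K(V⊕V*) '' (s ∪ t ∪ {pairing K n}))
    have hprod : IntermediateField.fixedField (productGroup G) ≤ F := by
      apply fixedField_productGroup_le
      rw [← hs, ← ht, ← Algebra.adjoin_union, Algebra.adjoin_le_iff]
      exact fun p hp ↦ IntermediateField.subset_adjoin K _ ⟨p, Or.inl hp, rfl⟩
    refine le_trans (IntermediateField.fixedField_antitone ?_)
      (fixedField_fixingSubgroup_inf_le _ hprod)
    rintro _ ⟨hfix, ⟨σ, τ⟩, rfl⟩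
    have hu : algebraMap K[V⊕V*] K(V⊕V*) (pairAct σ τ (pairing K n)) =
        algebraMap K[V⊕V*] K(V⊕V*) (pairing K n) := by
      rw [← pairActFrac_algebraMap (σ.1, τ.1)]
      exact hfix ⟨_, IntermediateField.subset_adjoin K _ ⟨pairing K n, Or.inr rfl, rfl⟩⟩
    have hστ : (σ : GL (Fin n) K) = τ :=
      pairAct_pairing_eq_iff.1 (IsFractionRing.injective _ _ hu)
    exact ⟨σ, σ.2, congrArg (fun τ ↦ pairActFrac ((σ : GL (Fin n) K), τ)) hστ⟩
  · rw [IntermediateField.adjoin_le_iff]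
    rintro _ ⟨p, (hp | hp) | rfl, rfl⟩
    · exact algebraMap_mem_invariantField (hs.le (Algebra.subset_adjoin hp)).2
    · exact algebraMap_mem_invariantField (ht.le (Algebra.subset_adjoin hp)).2
    · exact algebraMap_mem_invariantField (pairing_mem_invariantRing G)

end Invariants

section Star

lemma antidiagJ_mul_mul (M : Matrix (Fin n) (Fin n) K) :
    antidiagJ K n * M * antidiagJ K n = M.submatrix Fin.rev Fin.rev := by
  have hrev (i j : Fin n) : j = i.rev ↔ i = j.rev := by rw [eq_comm, Fin.rev_eq_iff]
  ext i j
  simp [antidiagJ, Matrix.mul_apply, hrev]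

lemma antidiagJ_inv : (antidiagJ K n)⁻¹ = antidiagJ K n := by
  have h := antidiagJ_mul_mul (K := K) (n := n) 1
  rw [Matrix.mul_one, submatrix_one _ Fin.rev_injective] at h
  exact Matrix.inv_eq_right_inv h

lemma starInvol_starInvol (p : K[V⊕V*]) :
    starInvol K n (starInvol K n p) = p := by
  rw [starInvol, rename_rename]
  convert rename_id_apply p
  ext (j | j) <;> simp

lemma gact_starInvol {σ τ : GL (Fin n) K} (h : (τ : Matrix (Fin n) (Fin n) K) =
      antidiagJ K n * ((σ⁻¹ : GL (Fin n) K) : Matrix (Fin n) (Fin n) K)ᵀ * antidiagJ K n)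
    (p : K[V⊕V*]) :
    gact K n σ (starInvol K n p) = starInvol K n (gact K n τ p) := by
  have hinv : ((τ⁻¹ : GL (Fin n) K) : Matrix (Fin n) (Fin n) K) =
      antidiagJ K n * (σ : Matrix (Fin n) (Fin n) K)ᵀ * antidiagJ K n := by
    rw [coe_units_inv, h, Matrix.mul_inv_rev, Matrix.mul_inv_rev, antidiagJ_inv,
      ← transpose_nonsing_inv, ← coe_units_inv, inv_inv, Matrix.mul_assoc]
  rw [antidiagJ_mul_mul] at h hinv
  refine DFunLike.congr_fun (f := (gact K n σ).comp (starInvol K n))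
    (g := (starInvol K n).comp (gact K n τ)) (algHom_ext ?_) p
  rintro (j | j)
  · simp only [gact, starInvol, AlgHom.comp_apply, rename_X, aeval_X, Sum.elim_inl, Sum.elim_inr,
      map_sum, _root_.map_mul, rename_C, h, submatrix_apply, transpose_apply]
    exact Fintype.sum_equiv Fin.revPerm _ _ fun i ↦ by simp
  · simp only [gact, starInvol, AlgHom.comp_apply, rename_X, aeval_X, Sum.elim_inl, Sum.elim_inr,
      map_sum, _root_.map_mul, rename_C, hinv, submatrix_apply, transpose_apply]
    exact Fintype.sum_equiv Fin.revPerm _ _ fun i ↦ by simp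

lemma starInvol_mem_yPolynomials {p : K[V⊕V*]} (hp : p ∈ xPolynomials K n) :
    starInvol K n p ∈ yPolynomials K n := by
  obtain ⟨p, rfl⟩ := hp
  refine ⟨rename Fin.rev p, ?_⟩
  change rename Sum.inr (rename Fin.rev p) = starInvol K n (rename Sum.inl p)
  simp only [starInvol, rename_rename, Sum.elim_comp_inl]
  rfl

lemma starInvol_mem_xPolynomials {p : K[V⊕V*]} (hp : p ∈ yPolynomials K n) :
    starInvol K n p ∈ xPolynomials K n := by
  obtain ⟨p, rfl⟩ := hp
  refine ⟨rename Fin.rev p, ?_⟩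
  change rename Sum.inl (rename Fin.rev p) = starInvol K n (rename Sum.inr p)
  simp only [starInvol, rename_rename, Sum.elim_comp_inr]
  rfl

lemma starInvol_mem_invariantRing {G : Subgroup (GL (Fin n) K)}
    (hstar : ∀ σ ∈ G, ∃ τ ∈ G, (τ : Matrix (Fin n) (Fin n) K) =
      antidiagJ K n * ((σ⁻¹ : GL (Fin n) K) : Matrix (Fin n) (Fin n) K)ᵀ * antidiagJ K n)
    {p : K[V⊕V*]} (hp : p ∈ invariantRing G) : starInvol K n p ∈ invariantRing G := by
  refine mem_invariantRing.2 fun σ hσ ↦ ?_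
  obtain ⟨τ, hτ, h⟩ := hstar σ hσ
  rw [gact_starInvol h, mem_invariantRing.1 hp τ hτ]

lemma map_starInvol_xPolynomials_inf_invariantRing {G : Subgroup (GL (Fin n) K)}
    (hstar : ∀ σ ∈ G, ∃ τ ∈ G, (τ : Matrix (Fin n) (Fin n) K) =
      antidiagJ K n * ((σ⁻¹ : GL (Fin n) K) : Matrix (Fin n) (Fin n) K)ᵀ * antidiagJ K n) :
    (xPolynomials K n ⊓ invariantRing G).map (starInvol K n) =
      yPolynomials K n ⊓ invariantRing G := by
  apply le_antisymm
  · rintro _ ⟨p, ⟨hpx, hpG⟩, rfl⟩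
    exact ⟨starInvol_mem_yPolynomials hpx, starInvol_mem_invariantRing hstar hpG⟩
  · rintro p ⟨hpy, hpG⟩
    exact ⟨starInvol K n p,
      ⟨starInvol_mem_xPolynomials hpy, starInvol_mem_invariantRing hstar hpG⟩,
      starInvol_starInvol p⟩

lemma adjoin_range_eq_xPolynomials_inf_invariantRing {G : Subgroup (GL (Fin n) K)} {ι : Type*}
    {f : ι → K[V⊕V*]}
    (hf : ∀ i, (∃ p₀ : MvPolynomial (Fin n) K, f i = rename Sum.inl p₀) ∧
      ∀ σ ∈ G, gact K n σ (f i) = f i)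
    (hgen : ∀ p : K[V⊕V*], (∃ p₀ : MvPolynomial (Fin n) K, p = rename Sum.inl p₀) →
      (∀ σ ∈ G, gact K n σ p = p) → p ∈ Algebra.adjoin K (Set.range f)) :
    Algebra.adjoin K (Set.range f) = xPolynomials K n ⊓ invariantRing G := by
  refine le_antisymm (Algebra.adjoin_le ?_) fun p hp ↦ ?_
  · rintro _ ⟨i, rfl⟩
    exact ⟨(hf i).1.imp fun _ h ↦ h.symm, mem_invariantRing.2 (hf i).2⟩
  · exact hgen p (hp.1.imp fun _ h ↦ h.symm) (mem_invariantRing.1 hp.2)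

lemma adjoin_image_starInvol_eq_yPolynomials_inf_invariantRing {G : Subgroup (GL (Fin n) K)}
    (hstar : ∀ σ ∈ G, ∃ τ ∈ G, (τ : Matrix (Fin n) (Fin n) K) =
      antidiagJ K n * ((σ⁻¹ : GL (Fin n) K) : Matrix (Fin n) (Fin n) K)ᵀ * antidiagJ K n)
    {s : Set K[V⊕V*]} (hs : Algebra.adjoin K s = xPolynomials K n ⊓ invariantRing G) :
    Algebra.adjoin K (starInvol K n '' s) = yPolynomials K n ⊓ invariantRing G := by
  rw [← map_starInvol_xPolynomials_inf_invariantRing hstar, ← hs, AlgHom.map_adjoin]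

end Star

end InvariantField

/-- Corollary 1.3: let `G ⊆ GL_n(K)` be a finite subgroup which is `*`-stable
(i.e. stable under `σ ↦ σ* = J (σ⁻¹)ᵀ J`), and suppose `K[x_1,…,x_n]^G` is generated
as a `K`-algebra by `f_1,…,f_m`.  Then the invariant field `K(V ⊕ V*)^G` is generated,
as a field extension of `K`, by the `f_i`, the `f_i^*`, and `u_0`. -/
theorem invariantField_eq_adjoin_of_starStable (hn : 0 < n)
    (G : Subgroup (GL (Fin n) K)) (hG : Finite G)
    (hstar : ∀ σ ∈ G, ∃ τ ∈ G, (τ : Matrix (Fin n) (Fin n) K) =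
      antidiagJ K n * ((σ⁻¹ : GL (Fin n) K) : Matrix (Fin n) (Fin n) K)ᵀ * antidiagJ K n)
    (m : ℕ) (f : Fin m → MvPolynomial (Fin n ⊕ Fin n) K)
    -- each `f i` lies in `K[x_1,…,x_n]` and is `G`-invariant …
    (hf₁ : ∀ i, (∃ p₀ : MvPolynomial (Fin n) K, f i = rename Sum.inl p₀) ∧
      ∀ σ ∈ G, gact K n σ (f i) = f i)
    -- … and every `G`-invariant element of `K[x_1,…,x_n]` is a polynomial in the `f i`:
    (hf₂ : ∀ p : MvPolynomial (Fin n ⊕ Fin n) K,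
      (∃ p₀ : MvPolynomial (Fin n) K, p = rename Sum.inl p₀) →
      (∀ σ ∈ G, gact K n σ p = p) → p ∈ Algebra.adjoin K (Set.range f))
    (z : FractionRing (MvPolynomial (Fin n ⊕ Fin n) K)) :
    (∀ σ ∈ G, gactFrac K n σ z = z) ↔
      z ∈ IntermediateField.adjoin K
        (algebraMap (MvPolynomial (Fin n ⊕ Fin n) K)
            (FractionRing (MvPolynomial (Fin n ⊕ Fin n) K)) ''
          (Set.range f ∪ Set.range (fun i => starInvol K n (f i)) ∪
            {∑ j : Fin n, X (Sum.inl j) * X (Sum.inr j)})) := by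
  have hx := adjoin_range_eq_xPolynomials_inf_invariantRing hf₁ hf₂
  have hy := adjoin_image_starInvol_eq_yPolynomials_inf_invariantRing hstar hx
  rw [← mem_invariantField, invariantField_eq_adjoin_of_starStable_general G hx hy,
    ← Set.range_comp]
  rfl
end

section
/- Let K be a field and A an ℕ-graded commutative K-algebra that is an integral domain. Let f_1,…,f_n, g_1,…,g_m, h_1,…,h_l ∈ A be homogeneous elements of positive degree such that: (i) f_1,…,f_n,g_1,…,g_m form a homogeneous system of parameters of A, i.e., they are algebraically independent over K and A is integral over the K-subalgebra they generate; (ii) the fraction field satisfies Quot(A) = K(f_1,…,f_n,g_1,…,g_m,h_1,…,h_l). Let P := K[X_1,…,X_n,Y_1,…,Y_m,Z_1,…,Z_l] be a polynomial ring, graded by assigning to X_i, Y_i, Z_i the degrees of f_i, g_i, h_i, and let φ: P → A be the K-algebra homomorphism with X_i ↦ f_i, Y_i ↦ g_i, Z_i ↦ h_i. Let R_1,…,R_l be homogeneous elements of ker(φ) such that: (iii) X_1,…,X_n, Y_1,…,Y_m, R_1,…,R_l form a homogeneous system of parameters of P; (iv) writing B := P/(R_1,…,R_l) and X̄_i, Ȳ_i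 for the classes of X_i, Y_i in B, and setting x := X̄_1⋯X̄_n and y := Ȳ_1⋯Ȳ_m, the localization B[x^{-1}] is generated as a K-algebra by x^{-1}, X̄_1,…,X̄_n, and m further elements, and B[y^{-1}] is generated as a K-algebra by y^{-1}, Ȳ_1,…,Ȳ_m, and n further elements. Then A = K[f_1,…,f_n,g_1,…,g_m,h_1,…,h_l] (A equals the K-subalgebra generated by these elements) and the kernel of φ is generated by R_1,…,R_l. -/
open MvPolynomial

/-! In a polynomial ring, homogeneous elements that form a system of parameters form a regular
sequence: in the local ring at the irrelevant ideal the variables are a regular sequence, and an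
exchange argument carries regularity from one system of parameters to any other. Hence the classes
`X̄ᵢ`, `Ȳⱼ` are non-zero-divisors in `B = P / (R₁, …, Rₗ)`, and `y = ∏ Ȳⱼ` is regular modulo
`x = ∏ X̄ᵢ`.

Condition (iv) presents `B[x⁻¹]` by `n + m` elements and the inverse of a polynomial in them. The
transcendence degree of `Quot(A)` is `n + m`, so these elements are algebraically independent, and
`B[x⁻¹]` is a localized polynomial ring, integrally closed in `Quot(A)`. The same holds for
`B[y⁻¹]`, and therefore for `B = B[x⁻¹] ∩ B[y⁻¹]`. As `A` is integral over `B`, the map `B → A` is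
bijective.
-/

section RegularSequences

open RingTheory.Sequence IsLocalRing

variable {R : Type*} [CommRing R]

theorem isWeaklyRegular_append_singleton_iff (l : List R) (a : R) :
    IsWeaklyRegular R (l ++ [a]) ↔
      IsWeaklyRegular R l ∧ ∀ p, a * p ∈ Ideal.ofList l → p ∈ Ideal.ofList l := by
  rw [isWeaklyRegular_append_iff, isWeaklyRegular_singleton_iff,
    isSMulRegular_quotient_iff_mem_of_smul_mem]
  simp only [smul_eq_mul, Ideal.mul_top]

theorem isWeaklyRegular_append_singleton_of_mem_radical {l : List R} {a b : R}
    (hab : a ∈ (Ideal.ofList (l ++ [b])).radical) (h : IsWeaklyRegular R (l ++ [a])) :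
    IsWeaklyRegular R (l ++ [b]) := by
  rw [isWeaklyRegular_append_singleton_iff] at h ⊢
  refine ⟨h.1, fun p hp => ?_⟩
  have cancel_pow : ∀ k, a ^ k * p ∈ Ideal.ofList l → p ∈ Ideal.ofList l := by
    intro k
    induction k with
    | zero => simp
    | succ k ih => exact fun hk => ih (h.2 _ (by rwa [← mul_assoc, ← pow_succ']))
  obtain ⟨k, hk⟩ := hab
  rw [Ideal.ofList_append, Ideal.ofList_singleton, Submodule.mem_sup] at hk
  obtain ⟨i, hi, z, hz, hiz⟩ := hk
  obtain ⟨q, rfl⟩ := Ideal.mem_span_singleton'.1 hz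
  refine cancel_pow k ?_
  rw [← hiz, add_mul, mul_assoc]
  exact add_mem (Ideal.mul_mem_right _ _ hi) (Ideal.mul_mem_left _ _ hp)

theorem exists_mem_forall_minimalPrimes_notMem [IsNoetherianRing R] {I J P : Ideal R}
    (hI : ∀ q ∈ I.minimalPrimes, ¬ P ≤ q) (hJ : ∀ q ∈ J.minimalPrimes, ¬ P ≤ q) :
    ∃ c ∈ P, (∀ q ∈ I.minimalPrimes, c ∉ q) ∧ ∀ q ∈ J.minimalPrimes, c ∉ q := by
  have hfin : (I.minimalPrimes ∪ J.minimalPrimes).Finite :=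
    (Ideal.finite_minimalPrimes_of_isNoetherianRing R I).union
      (Ideal.finite_minimalPrimes_of_isNoetherianRing R J)
  have not_subset : ¬ (P : Set R) ⊆ ⋃ q ∈ I.minimalPrimes ∪ J.minimalPrimes, q := by
    rw [Ideal.subset_union_prime_finite hfin (f := fun q => q) ⊥ ⊥
      fun q hq _ _ => hq.elim (·.isPrime) (·.isPrime)]
    rintro ⟨q, hq | hq, hle⟩
    exacts [hI q hq hle, hJ q hq hle]
  obtain ⟨c, hcP, hc⟩ := Set.not_subset.1 not_subset
  simp only [Set.mem_iUnion, not_exists] at hc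
  exact ⟨c, hcP, fun q hq => hc q (.inl hq), fun q hq => hc q (.inr hq)⟩

variable [IsLocalRing R]

theorem mem_maximalIdeal_of_radical_ofList_eq {l : List R}
    (hl : (Ideal.ofList l).radical = maximalIdeal R) {a : R} (ha : a ∈ l) :
    a ∈ maximalIdeal R :=
  hl ▸ Ideal.le_radical (Ideal.subset_span ha)

variable [IsNoetherianRing R]

/- If a prime `q` lay strictly between some minimal prime of `l` and the maximal ideal, then the
latter would have height at least two modulo `l`, whereas it is minimal over `l ++ [a]`. -/
theorem radical_ofList_append_singleton_eq_maximalIdeal {l : List R} {a c : R}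
    (ha : (Ideal.ofList (l ++ [a])).radical = maximalIdeal R) (hc : c ∈ maximalIdeal R)
    (hcl : ∀ q ∈ (Ideal.ofList l).minimalPrimes, c ∉ q) :
    (Ideal.ofList (l ++ [c])).radical = maximalIdeal R := by
  have ofList_append_singleton (x : R) :
      Ideal.ofList (l ++ [x]) = Ideal.span (insert x {r | r ∈ l}) := by
    rw [Ideal.ofList_append, Ideal.ofList_singleton, Ideal.span_insert, sup_comm]
  rw [ofList_append_singleton] at ha ⊢
  have hl : {r | r ∈ l} ⊆ (maximalIdeal R : Set R) := fun r hr =>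
    ha ▸ Ideal.le_radical (Ideal.subset_span (Set.mem_insert_of_mem _ hr))
  have hmin : maximalIdeal R ∈ (Ideal.span (insert a {r | r ∈ l})).minimalPrimes :=
    ⟨⟨inferInstance, ha ▸ Ideal.le_radical⟩, fun q hq _ => ha ▸ hq.1.radical_le_iff.2 hq.2⟩
  refine le_antisymm ((Ideal.IsPrime.radical_le_iff inferInstance).2
    (Ideal.span_le.2 (Set.insert_subset hc hl))) ?_
  rw [Ideal.radical_eq_sInf, le_sInf_iff]
  rintro q ⟨hq, hqp⟩
  have hcq : c ∈ q := hq (Ideal.subset_span (Set.mem_insert _ _))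
  have hlq : {r | r ∈ l} ⊆ (q : Set R) :=
    (Set.subset_insert _ _).trans (Ideal.subset_span.trans hq)
  by_contra hne
  have hqm : q < maximalIdeal R :=
    lt_of_le_not_ge (IsLocalRing.le_maximalIdeal hqp.ne_top) hne
  refine hcl q (Ideal.mem_minimalPrimes_span_of_mem_minimalPrimes_span_insert hqm a _ hmin _ hlq
    fun r hr => ?_) hcq
  exact Ideal.le_radical (Ideal.subset_span (Set.mem_insert_of_mem _ hr))

theorem not_maximalIdeal_le_of_mem_minimalPrimes_ofList {l : List R}
    (hl : l.length < ringKrullDim R) : ∀ q ∈ (Ideal.ofList l).minimalPrimes,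
      ¬ maximalIdeal R ≤ q := by
  classical
  intro q hq hle
  obtain rfl : q = maximalIdeal R :=
    ((maximalIdeal.isMaximal R).eq_of_le hq.isPrime.ne_top hle).symm
  have hspan : Ideal.ofList l = Ideal.span (l.toFinset : Set R) := by
    rw [List.coe_toFinset]
  rw [hspan] at hq
  have hheight : (maximalIdeal R).height ≤ l.length :=
    (Ideal.height_le_card_of_mem_minimalPrimes_span_finset hq).trans
      (Nat.cast_le.2 l.toFinset_card_le)
  refine hl.not_ge ?_
  rw [← maximalIdeal_height_eq_ringKrullDim]
  exact_mod_cast hheight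

theorem length_le_ringKrullDim_of_isWeaklyRegular {l : List R}
    (hl : ∀ a ∈ l, a ∈ maximalIdeal R) (h : IsWeaklyRegular R l) : l.length ≤ ringKrullDim R := by
  have hreg : IsRegular R l := .of_isWeaklyRegular_of_mem_maximalIdeal R hl h
  rw [← ringKrullDim_add_length_eq_ringKrullDim_of_isRegular l hreg]
  have : Nontrivial (R ⧸ Ideal.ofList l) := Ideal.Quotient.nontrivial_iff.2 fun htop =>
    (maximalIdeal.isMaximal R).ne_top (top_le_iff.1 (htop ▸ Ideal.span_le.2 hl))
  exact le_add_of_nonneg_left ringKrullDim_nonneg_of_nontrivial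

theorem isWeaklyRegular_of_perm_of_radical_eq {l l' : List R} (hp : l.Perm l')
    (hl : (Ideal.ofList l).radical = maximalIdeal R) (h : IsWeaklyRegular R l) :
    IsWeaklyRegular R l' :=
  isWeaklyRegular_of_perm_of_subset_maximalIdeal h hp
    fun _ => mem_maximalIdeal_of_radical_ofList_eq hl

/- The exchange argument: some `c` is a parameter modulo both `cs ++ as` and `cs ++ bs`, so it can
replace the last element of the first sequence, move to the front, and finally be replaced by the
last element of the second one. -/
theorem isWeaklyRegular_append_of_radical_eq {as : List R} :
    ∀ {cs bs : List R}, as.length = bs.length →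
      (Ideal.ofList (cs ++ as)).radical = maximalIdeal R →
      (Ideal.ofList (cs ++ bs)).radical = maximalIdeal R →
      IsWeaklyRegular R (cs ++ as) → IsWeaklyRegular R (cs ++ bs) := by
  induction as using List.reverseRecOn with
  | nil =>
    intro cs bs hlen _ _ h
    obtain rfl := List.length_eq_zero_iff.1 hlen.symm
    exact h
  | append_singleton as a ih =>
    intro cs bs hlen has hbs h
    obtain rfl | ⟨bs, b, rfl⟩ := List.eq_nil_or_concat' bs
    · simp at hlen
    simp only [List.length_append, List.length_singleton, Nat.add_right_cancel_iff] at hlen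
    have hdim := length_le_ringKrullDim_of_isWeaklyRegular
      (fun _ => mem_maximalIdeal_of_radical_ofList_eq has) h
    rw [← List.append_assoc] at has hbs h hdim ⊢
    have lt_dim {l : List R} (hl : l.length = as.length) :
        (cs ++ l).length < ringKrullDim R := by
      refine lt_of_lt_of_le (Nat.cast_lt.2 ?_) hdim
      simp [hl]
    obtain ⟨c, hc, hcas, hcbs⟩ := exists_mem_forall_minimalPrimes_notMem
      (not_maximalIdeal_le_of_mem_minimalPrimes_ofList (lt_dim rfl))
      (not_maximalIdeal_le_of_mem_minimalPrimes_ofList (lt_dim hlen.symm))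
    have has' := radical_ofList_append_singleton_eq_maximalIdeal has hc hcas
    have hbs' := radical_ofList_append_singleton_eq_maximalIdeal hbs hc hcbs
    have move_front (l : List R) : (cs ++ l ++ [c]).Perm (cs ++ [c] ++ l) := by
      simpa using (List.perm_append_singleton c l).append_left cs
    have ofList_perm {l l' : List R} (hp : l.Perm l') : Ideal.ofList l = Ideal.ofList l' :=
      congrArg Ideal.span (Set.ext fun _ => hp.mem_iff)
    have replace_a : IsWeaklyRegular R (cs ++ as ++ [c]) :=
      isWeaklyRegular_append_singleton_of_mem_radical
        (has' ▸ mem_maximalIdeal_of_radical_ofList_eq has (by simp)) h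
    have replace_as : IsWeaklyRegular R (cs ++ [c] ++ bs) := by
      refine ih hlen ?_ ?_ (isWeaklyRegular_of_perm_of_radical_eq (move_front as) has' replace_a)
      · rwa [← ofList_perm (move_front as)]
      · rwa [← ofList_perm (move_front bs)]
    refine isWeaklyRegular_append_singleton_of_mem_radical (hbs ▸ hc)
      (isWeaklyRegular_of_perm_of_radical_eq (move_front bs).symm ?_ replace_as)
    rwa [← ofList_perm (move_front bs)]

theorem isWeaklyRegular_of_radical_eq {as bs : List R} (hlen : as.length = bs.length)
    (has : (Ideal.ofList as).radical = maximalIdeal R)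
    (hbs : (Ideal.ofList bs).radical = maximalIdeal R) (h : IsWeaklyRegular R as) :
    IsWeaklyRegular R bs :=
  isWeaklyRegular_append_of_radical_eq (cs := []) hlen has hbs h

end RegularSequences

section GradedCancellation

variable {A S : Type*} [CommRing A] [SetLike S A] [AddSubmonoidClass S A]

theorem mem_of_mul_mem_of_isHomogeneous (𝒜 : ℕ → S) [GradedRing 𝒜] {J : Ideal A}
    (hJ : J.IsHomogeneous 𝒜) {s p : A} (hs : IsUnit (DirectSum.decompose 𝒜 s 0 : A))
    (hsp : s * p ∈ J) : p ∈ J := by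
  have component_mem (d : ℕ) : (DirectSum.decompose 𝒜 p d : A) ∈ J := by
    induction d using Nat.strong_induction_on with
    | _ d ih =>
      have hd := hJ d hsp
      have hmem : (0, d) ∈ Finset.HasAntidiagonal.antidiagonal d :=
        Finset.HasAntidiagonal.mem_antidiagonal.2 (zero_add d)
      rw [DirectSum.decompose_mul, DirectSum.coe_mul_apply_eq_sum_antidiagonal,
        ← Finset.add_sum_erase _ _ hmem] at hd
      refine (J.unit_mul_mem_iff_mem hs).1 ((J.add_mem_iff_left (J.sum_mem fun ij hij => ?_)).1 hd)
      obtain ⟨hne, hsum⟩ := Finset.mem_erase.1 hij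
      rw [Finset.HasAntidiagonal.mem_antidiagonal] at hsum
      refine J.mul_mem_left _ (ih _ (lt_of_le_of_ne (by omega) fun h => hne ?_))
      exact Prod.ext (by dsimp only at h ⊢; omega) h
  classical
  rw [← DirectSum.sum_support_decompose 𝒜 p]
  exact J.sum_mem fun d _ => component_mem d

end GradedCancellation

section PolynomialRing

variable {K σ : Type*}

variable (K σ) in
/-- The ideal of polynomials without constant term. It is the irrelevant ideal for the grading by
any positive weights of the variables. -/
noncomputable abbrev irrelevantIdeal [CommRing K] : Ideal (MvPolynomial σ K) :=
  RingHom.ker (constantCoeff (σ := σ) (R := K))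

instance [CommRing K] [IsDomain K] : (irrelevantIdeal K σ).IsPrime :=
  RingHom.ker_isPrime _

theorem mem_irrelevantIdeal_of_isWeightedHomogeneous [CommRing K] {w : σ → ℕ}
    {p : MvPolynomial σ K} {e : ℕ} (he : 0 < e) (hp : IsWeightedHomogeneous w p e) :
    p ∈ irrelevantIdeal K σ :=
  hp.coeff_eq_zero 0 (by simpa using he.ne)

theorem mem_of_mul_mem_span_of_isWeightedHomogeneous [CommRing K] {w : σ → ℕ} (hw : ∀ i, 0 < w i)
    {T : Set (MvPolynomial σ K)} (hT : ∀ t ∈ T, ∃ e, IsWeightedHomogeneous w t e)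
    {s p : MvPolynomial σ K} (hs : IsUnit (constantCoeff s)) (hsp : s * p ∈ Ideal.span T) :
    p ∈ Ideal.span T := by
  let _ := weightedGradedAlgebra K w
  refine mem_of_mul_mem_of_isHomogeneous (weightedHomogeneousSubmodule K w)
    (Ideal.homogeneous_span _ _ hT) ?_ hsp
  have hzero : ((DirectSum.decompose (weightedHomogeneousSubmodule K w) s 0 : _) :
      MvPolynomial σ K) = C (coeff 0 s) :=
    (weightedDecomposition.decompose'_apply K w s 0).trans
      (weightedHomogeneousComponent_zero s fun i => (hw i).ne')
  rw [hzero]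
  exact hs.map (C (σ := σ))

theorem X_mul_mem_span_X_image_iff [CommRing K] {s : Set σ} {i : σ} (hi : i ∉ s)
    {p : MvPolynomial σ K} : X i * p ∈ Ideal.span (X '' s : Set (MvPolynomial σ K)) ↔
      p ∈ Ideal.span (X '' s) := by
  classical
  refine ⟨fun h => ?_, Ideal.mul_mem_left _ _⟩
  rw [mem_ideal_span_X_image] at h ⊢
  intro m hm
  obtain ⟨j, hj, hmj⟩ := h (m + Finsupp.single i 1) (by
    rw [mem_support_iff, mul_comm, coeff_mul_X]
    exact mem_support_iff.1 hm)
  have hij : i ≠ j := fun h => hi (h ▸ hj)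
  exact ⟨j, hj, by simpa [Finsupp.single_eq_of_ne' hij] using hmj⟩

theorem isWeaklyRegular_map_X [CommRing K] {L : List σ} (hL : L.Nodup) :
    RingTheory.Sequence.IsWeaklyRegular (MvPolynomial σ K) (L.map (X (R := K))) := by
  induction L using List.reverseRecOn with
  | nil => exact .nil _ _
  | append_singleton L i ih =>
    rw [List.map_append, List.map_singleton, isWeaklyRegular_append_singleton_iff]
    have hi : i ∉ {j | j ∈ L} := fun h => (List.nodup_append.1 hL).2.2 i h i (by simp) rfl
    have hspan : Ideal.ofList (L.map (X (R := K))) = Ideal.span (X '' {j | j ∈ L}) :=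
      congrArg Ideal.span (by ext; simp)
    exact ⟨ih (List.nodup_append.1 hL).1, fun p hp =>
      hspan ▸ (X_mul_mem_span_X_image_iff hi).1 (hspan ▸ hp)⟩

theorem isWeaklyRegular_of_map_localization [Field K] {w : σ → ℕ} (hw : ∀ i, 0 < w i)
    {L : List (MvPolynomial σ K)} (hL : ∀ p ∈ L, ∃ e, IsWeightedHomogeneous w p e)
    (h : RingTheory.Sequence.IsWeaklyRegular (Localization.AtPrime (irrelevantIdeal K σ))
      (L.map (algebraMap _ (Localization.AtPrime (irrelevantIdeal K σ))))) :
    RingTheory.Sequence.IsWeaklyRegular (MvPolynomial σ K) L := by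
  induction L using List.reverseRecOn with
  | nil => exact .nil _ _
  | append_singleton L a ih =>
    rw [List.map_append, List.map_singleton, isWeaklyRegular_append_singleton_iff] at h
    rw [isWeaklyRegular_append_singleton_iff]
    have hL' : ∀ p ∈ L, ∃ e, IsWeightedHomogeneous w p e := fun p hp => hL p (by simp [hp])
    refine ⟨ih hL' h.1, fun p hp => ?_⟩
    have hloc := h.2 (algebraMap _ _ p) (by
      rw [← map_mul, ← Ideal.map_ofList]
      exact Ideal.mem_map_of_mem _ hp)
    rw [← Ideal.map_ofList, IsLocalization.algebraMap_mem_map_algebraMap_iff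
      (irrelevantIdeal K σ).primeCompl] at hloc
    obtain ⟨s, hs, hsp⟩ := hloc
    exact mem_of_mul_mem_span_of_isWeightedHomogeneous hw hL' (isUnit_iff_ne_zero.2 hs) hsp

end PolynomialRing

section IntegralOverAdjoin

theorem exists_sub_algebraMap_mem_of_mem_adjoin {K A : Type*} [CommRing K] [CommRing A]
    [Algebra K A] {T : Set A} {q : Ideal A} (hT : T ⊆ q) {t : A}
    (ht : t ∈ Algebra.adjoin K T) : ∃ c : K, t - algebraMap K A c ∈ q := by
  have map_le : (Algebra.adjoin K T).map (Ideal.Quotient.mkₐ K q) ≤ ⊥ := by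
    rw [AlgHom.map_adjoin, Algebra.adjoin_le_iff]
    rintro _ ⟨x, hx, rfl⟩
    rw [Ideal.Quotient.mkₐ_eq_mk, Ideal.Quotient.eq_zero_iff_mem.2 (hT hx)]
    exact zero_mem _
  obtain ⟨c, hc⟩ := Algebra.mem_bot.1 (map_le ⟨t, ht, rfl⟩)
  exact ⟨c, Ideal.Quotient.eq.1 hc.symm⟩

variable {K A : Type*} [Field K] [CommRing A] [Algebra K A]

theorem isMaximal_of_isIntegral_adjoin {T : Set A}
    (h_int : Algebra.IsIntegral (Algebra.adjoin K T) A)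
    {q : Ideal A} [q.IsPrime] (hT : T ⊆ q) : q.IsMaximal := by
  refine Ideal.isMaximal_of_isIntegral_of_isMaximal_comap (R := Algebra.adjoin K T) q
    (Ideal.isMaximal_iff.2 ⟨?_, fun J t hJ ht htJ => ?_⟩)
  · rw [Ideal.mem_comap, map_one]
    exact q.ne_top_iff_one.1 (Ideal.IsPrime.ne_top inferInstance)
  obtain ⟨c, hc⟩ := exists_sub_algebraMap_mem_of_mem_adjoin hT t.2
  have hc0 : c ≠ 0 := by
    rintro rfl
    rw [map_zero, sub_zero] at hc
    exact ht hc
  have hcJ : algebraMap K (Algebra.adjoin K T) c ∈ J := by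
    simpa using J.sub_mem htJ (hJ (x := t - algebraMap K _ c) hc)
  exact (Ideal.eq_top_iff_one J).1 (J.eq_top_of_isUnit_mem hcJ ((isUnit_iff_ne_zero.2 hc0).map _))

theorem radical_ofList_map_eq_maximalIdeal {L : List A}
    (h_int : Algebra.IsIntegral (Algebra.adjoin K {a | a ∈ L}) A)
    {P : Ideal A} [P.IsPrime] (hL : ∀ a ∈ L, a ∈ P) :
    (Ideal.ofList (L.map (algebraMap A (Localization.AtPrime P)))).radical =
      IsLocalRing.maximalIdeal (Localization.AtPrime P) := by
  rw [← Ideal.map_ofList]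
  refine le_antisymm ((Ideal.IsPrime.radical_le_iff inferInstance).2 ?_) ?_
  · rw [← Localization.AtPrime.map_eq_maximalIdeal]
    exact Ideal.map_mono (Ideal.span_le.2 hL)
  rw [Ideal.radical_eq_sInf, le_sInf_iff]
  rintro q ⟨hLq, hq⟩
  have hmax : (q.under A).IsMaximal :=
    isMaximal_of_isIntegral_adjoin h_int fun a ha =>
      hLq (Ideal.mem_map_of_mem _ (Ideal.subset_span ha))
  have hle : q.under A ≤ P :=
    (Ideal.comap_mono (IsLocalRing.le_maximalIdeal hq.ne_top)).trans_eq
      Localization.AtPrime.under_maximalIdeal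
  rw [← IsLocalization.map_under P.primeCompl _ q,
    hmax.eq_of_le (Ideal.IsPrime.ne_top inferInstance) hle,
    Localization.AtPrime.map_eq_maximalIdeal]

end IntegralOverAdjoin

section RegularModulo

variable {B : Type*} [CommRing B]

/-- The elements of `B` that act as non-zero-divisors on `B ⧸ (a)`. -/
def regularModulo (a : B) : Submonoid B where
  carrier := {c | ∀ b, a ∣ c * b → a ∣ b}
  one_mem' b hb := by rwa [one_mul] at hb
  mul_mem' hc hc' b hb := hc' b (hc _ (by rwa [← mul_assoc]))

theorem mem_regularModulo_mul {a a' c : B} (ha : a ∈ nonZeroDivisors B)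
    (hc : c ∈ regularModulo a) (hc' : c ∈ regularModulo a') : c ∈ regularModulo (a * a') := by
  intro b hb
  obtain ⟨d, rfl⟩ := hc b ((dvd_mul_right a a').trans hb)
  rw [mul_left_comm, dvd_cancel_left_mem_nonZeroDivisors ha] at hb
  exact mul_dvd_mul_left a (hc' d hb)

theorem mem_regularModulo_prod {ι : Type*} {s : Finset ι} {X : ι → B} {c : B}
    (hX : ∀ i ∈ s, X i ∈ nonZeroDivisors B) (hc : ∀ i ∈ s, c ∈ regularModulo (X i)) :
    c ∈ regularModulo (∏ i ∈ s, X i) := by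
  induction s using Finset.cons_induction with
  | empty => exact fun b _ => by simp
  | cons i s hi ih =>
    rw [Finset.forall_mem_cons] at hX hc
    rw [Finset.prod_cons]
    exact mem_regularModulo_mul hX.1 hc.1 (ih hX.2 hc.2)

theorem mem_regularModulo_pow {a c : B} (ha : a ∈ nonZeroDivisors B)
    (hc : c ∈ regularModulo a) (k : ℕ) : c ∈ regularModulo (a ^ k) := by
  simpa using mem_regularModulo_prod (s := Finset.range k) (fun _ _ => ha) fun _ _ => hc

end RegularModulo

section HomogeneousSystemOfParameters

variable {K σ : Type*} [Field K] {w : σ → ℕ}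

theorem isWeaklyRegular_of_isIntegral_adjoin [Fintype σ] (hw : ∀ i, 0 < w i)
    {L : List (MvPolynomial σ K)} (hlen : L.length = Fintype.card σ)
    (hL : ∀ p ∈ L, ∃ e, 0 < e ∧ IsWeightedHomogeneous w p e)
    (h_int : Algebra.IsIntegral (Algebra.adjoin K {p | p ∈ L}) (MvPolynomial σ K)) :
    RingTheory.Sequence.IsWeaklyRegular (MvPolynomial σ K) L := by
  have hX : ∀ p ∈ (Finset.univ.toList : List σ).map (X (R := K)), p ∈ irrelevantIdeal K σ := by
    simp
  have h_intX : Algebra.IsIntegral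
      (Algebra.adjoin K {p | p ∈ (Finset.univ.toList : List σ).map (X (R := K))})
      (MvPolynomial σ K) := by
    have hrange : {p | p ∈ (Finset.univ.toList : List σ).map (X (R := K))} = Set.range X := by
      ext; simp
    rw [hrange, adjoin_range_X]
    exact ⟨fun p => isIntegral_algebraMap (x := (⟨p, trivial⟩ : (⊤ : Subalgebra K _)))⟩
  refine isWeaklyRegular_of_map_localization hw
    (fun p hp => (hL p hp).imp fun _ he => he.2)
    (isWeaklyRegular_of_radical_eq (by simp [hlen])
      (radical_ofList_map_eq_maximalIdeal h_intX hX)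
      (radical_ofList_map_eq_maximalIdeal h_int fun p hp => ?_)
      ((isWeaklyRegular_map_X (Finset.nodup_toList _)).of_isLocalization
        (Localization.AtPrime (irrelevantIdeal K σ))
        (irrelevantIdeal K σ).primeCompl))
  obtain ⟨e, he, hpe⟩ := hL p hp
  exact mem_irrelevantIdeal_of_isWeightedHomogeneous he hpe

variable [Fintype σ] {ι : Type*} [Fintype ι]

/-- A homogeneous system of parameters of a polynomial ring graded by the weights `w`. Algebraic
independence over `K` is replaced by the equivalent count `card_eq`. -/
structure IsHomogeneousParameterSystem (w : σ → ℕ) (θ : ι → MvPolynomial σ K) : Prop where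
  card_eq : Fintype.card ι = Fintype.card σ
  exists_isWeightedHomogeneous : ∀ i, ∃ e, 0 < e ∧ IsWeightedHomogeneous w (θ i) e
  isIntegral : Algebra.IsIntegral (Algebra.adjoin K (Set.range θ)) (MvPolynomial σ K)

variable {θ : ι → MvPolynomial σ K}

theorem IsHomogeneousParameterSystem.isWeaklyRegular_map (hθ : IsHomogeneousParameterSystem w θ)
    (hw : ∀ i, 0 < w i) {L : List ι} (hL : L.Nodup) :
    RingTheory.Sequence.IsWeaklyRegular (MvPolynomial σ K) (L.map θ) := by
  classical
  let M : List ι := L ++ L.toFinsetᶜ.toList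
  have hM : ∀ i, i ∈ M := fun i => by
    by_cases hi : i ∈ L <;> simp [M, hi]
  have hrange : {p | p ∈ M.map θ} = Set.range θ := by
    ext p
    simp [hM]
  have regular : RingTheory.Sequence.IsWeaklyRegular (MvPolynomial σ K) (M.map θ) := by
    refine isWeaklyRegular_of_isIntegral_adjoin hw ?_ (by simpa [hM] using hθ.2)
      (hrange ▸ hθ.isIntegral)
    rw [← hθ.card_eq, List.length_map, List.length_append, Finset.length_toList,
      ← List.toFinset_card_of_nodup hL, Finset.card_add_card_compl]
  rw [List.map_append, RingTheory.Sequence.isWeaklyRegular_append_iff] at regular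
  exact regular.1

theorem IsHomogeneousParameterSystem.mem_span_image_of_mul_mem
    (hθ : IsHomogeneousParameterSystem w θ) (hw : ∀ i, 0 < w i) {s : Set ι} {a : ι} (ha : a ∉ s)
    {p : MvPolynomial σ K} (hp : θ a * p ∈ Ideal.span (θ '' s)) : p ∈ Ideal.span (θ '' s) := by
  classical
  let L : List ι := s.toFinite.toFinset.toList
  have hL : (L ++ [a]).Nodup :=
    (Finset.nodup_toList _).append (List.nodup_singleton a) (by simpa [L] using ha)
  have hspan : Ideal.ofList (L.map θ) = Ideal.span (θ '' s) :=
    congrArg Ideal.span (by ext; simp [L])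
  have regular := hθ.isWeaklyRegular_map hw hL
  rw [List.map_append, List.map_singleton, isWeaklyRegular_append_singleton_iff, hspan] at regular
  exact regular.2 p hp

variable {κ : Type*} [Fintype κ] {R : κ → MvPolynomial σ K}

theorem IsHomogeneousParameterSystem.mk_mem_nonZeroDivisors
    (hθR : IsHomogeneousParameterSystem w (Sum.elim θ R)) (hw : ∀ i, 0 < w i)
    (i : ι) : Ideal.Quotient.mk (Ideal.span (Set.range R)) (θ i) ∈
      nonZeroDivisors (MvPolynomial σ K ⧸ Ideal.span (Set.range R)) := by
  rw [mem_nonZeroDivisors_iff_left]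
  intro b hb
  obtain ⟨p, rfl⟩ := Ideal.Quotient.mk_surjective b
  have himage : Sum.elim θ R '' Set.range Sum.inr = Set.range R := by
    rw [← Set.range_comp, Sum.elim_comp_inr]
  rw [← map_mul, Ideal.Quotient.eq_zero_iff_mem, ← himage] at hb
  rw [Ideal.Quotient.eq_zero_iff_mem, ← himage]
  exact hθR.mem_span_image_of_mul_mem hw (a := Sum.inl i) (by simp) hb

theorem IsHomogeneousParameterSystem.mk_mem_regularModulo
    (hθR : IsHomogeneousParameterSystem w (Sum.elim θ R)) (hw : ∀ i, 0 < w i)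
    {i j : ι} (hij : i ≠ j) :
    Ideal.Quotient.mk (Ideal.span (Set.range R)) (θ j) ∈
      regularModulo (Ideal.Quotient.mk (Ideal.span (Set.range R)) (θ i)) := by
  intro b hb
  obtain ⟨p, rfl⟩ := Ideal.Quotient.mk_surjective b
  have mk_dvd_iff (q : MvPolynomial σ K) :
      Ideal.Quotient.mk (Ideal.span (Set.range R)) (θ i) ∣ Ideal.Quotient.mk _ q ↔
        q ∈ Ideal.span (Sum.elim θ R '' insert (Sum.inl i) (Set.range Sum.inr)) := by
    rw [Set.image_insert_eq, Sum.elim_inl, ← Set.range_comp, Sum.elim_comp_inr, Ideal.span_insert,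
      ← Ideal.mem_span_singleton, ← Set.image_singleton, ← Ideal.map_span,
      Ideal.mem_quotient_iff_mem_sup]
  rw [← map_mul, mk_dvd_iff] at hb
  rw [mk_dvd_iff]
  exact hθR.mem_span_image_of_mul_mem hw (a := Sum.inl j) (by simpa using hij.symm) hb

theorem isHomogeneousParameterSystem_elim_X {ρ τ : Type*} [Fintype ρ] [Fintype τ]
    {w : ρ ⊕ τ ⊕ κ → ℕ} (hw : ∀ i, 0 < w i) {R : κ → MvPolynomial (ρ ⊕ τ ⊕ κ) K}
    (hR : ∀ i, ∃ e, 0 < e ∧ IsWeightedHomogeneous w (R i) e)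
    (h_int : Algebra.IsIntegral (Algebra.adjoin K (Set.range (Sum.elim (fun i => X (.inl i))
      (Sum.elim (fun j => X (.inr (.inl j))) R)))) (MvPolynomial (ρ ⊕ τ ⊕ κ) K)) :
    IsHomogeneousParameterSystem w
      (Sum.elim (Sum.elim (fun i => X (.inl i)) fun j => X (.inr (.inl j))) R) where
  card_eq := Fintype.card_congr (Equiv.sumAssoc ρ τ κ)
  exists_isWeightedHomogeneous := by
    rintro ((i | j) | k)
    exacts [⟨_, hw _, isWeightedHomogeneous_X K _ _⟩, ⟨_, hw _, isWeightedHomogeneous_X K _ _⟩,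
      hR k]
  isIntegral := by
    rwa [Set.Sum.elim_range, Set.Sum.elim_range, Set.union_assoc, ← Set.Sum.elim_range,
      ← Set.Sum.elim_range]

end HomogeneousSystemOfParameters

section IntegrallyClosed

-- Since `y` is regular modulo `x`, an element `b / x ^ k = c / y ^ j` of `F` lies in `B`.
theorem isIntegrallyClosedIn_of_isLocalizationAway {B : Type*} (S S' : Type*) {F : Type*}
    [CommRing B] [CommRing S] [CommRing S'] [CommRing F] [Algebra B S] [Algebra B S'] [Algebra B F]
    [Algebra S F] [Algebra S' F] [IsScalarTower B S F] [IsScalarTower B S' F] {x y : B}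
    [IsLocalization.Away x S] [IsLocalization.Away y S'] [IsIntegrallyClosedIn S F]
    [IsIntegrallyClosedIn S' F] (hx : x ∈ nonZeroDivisors B) (hxy : y ∈ regularModulo x) :
    IsIntegrallyClosedIn B F := by
  have injective : Function.Injective (algebraMap B F) := by
    rw [IsScalarTower.algebraMap_eq B S F]
    exact (IsIntegralClosure.algebraMap_injective S S F).comp
      (IsLocalization.injective S (Submonoid.powers_le.2 hx))
  refine isIntegrallyClosedIn_iff.2 ⟨injective, fun {α} hα => ?_⟩
  obtain ⟨s, rfl⟩ := IsIntegrallyClosedIn.algebraMap_eq_of_integral (hα.tower_top (A := S))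
  obtain ⟨s', hs'⟩ := IsIntegrallyClosedIn.algebraMap_eq_of_integral (hα.tower_top (A := S'))
  obtain ⟨k, b, hb⟩ := IsLocalization.Away.surj x s
  obtain ⟨j, c, hc⟩ := IsLocalization.Away.surj y s'
  have hbF := congrArg (algebraMap S F) hb
  have hcF := congrArg (algebraMap S' F) hc
  simp only [map_mul, map_pow, ← IsScalarTower.algebraMap_apply, hs'] at hbF hcF
  have hbc : y ^ j * b = x ^ k * c := injective (by
    rw [map_mul, map_mul, map_pow, map_pow, ← hbF, ← hcF]
    ring)
  obtain ⟨d, rfl⟩ := pow_mem (mem_regularModulo_pow hx hxy k) j b ⟨c, hbc⟩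
  have hunit : IsUnit (algebraMap B F (x ^ k)) := by
    rw [map_pow, IsScalarTower.algebraMap_apply B S F]
    exact ((IsLocalization.Away.algebraMap_isUnit x).map _).pow k
  refine ⟨d, hunit.mul_left_cancel ?_⟩
  rw [← map_mul, ← hbF, mul_comm, map_pow]

theorem bijective_algebraMap_of_isIntegrallyClosedIn {B A : Type*} [CommRing B] [CommRing A]
    [Algebra B A] [IsIntegrallyClosedIn B A] [Algebra.IsIntegral B A] :
    Function.Bijective (algebraMap B A) :=
  ⟨IsIntegralClosure.algebraMap_injective B B A, fun a =>
    IsIntegrallyClosedIn.algebraMap_eq_of_integral (Algebra.IsIntegral.isIntegral a)⟩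

end IntegrallyClosed

section LocalizedPolynomialRing

section CommRing

variable {K S : Type*} [CommRing K] [CommRing S] [Algebra K S]

theorem exists_pow_mul_mem_adjoin_of_adjoin_insert_eq_top {T : Set S} {x u : S}
    (hx : x ∈ Algebra.adjoin K T) (hxu : x * u = 1) (htop : Algebra.adjoin K (insert u T) = ⊤)
    (s : S) : ∃ k : ℕ, x ^ k * s ∈ Algebra.adjoin K T := by
  induction htop ▸ (Algebra.mem_top : s ∈ (⊤ : Subalgebra K S)) using
    Algebra.adjoin_induction with
  | mem s hs =>
    obtain rfl | hs := hs
    · exact ⟨1, by simp [hxu]⟩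
    · exact ⟨0, by simpa using Algebra.subset_adjoin hs⟩
  | algebraMap c => exact ⟨0, by simp⟩
  | add s t _ _ hs ht =>
    obtain ⟨k, hk⟩ := hs
    obtain ⟨j, hj⟩ := ht
    refine ⟨k + j, ?_⟩
    rw [show x ^ (k + j) * (s + t) = x ^ j * (x ^ k * s) + x ^ k * (x ^ j * t) by ring]
    exact add_mem (mul_mem (pow_mem hx j) hk) (mul_mem (pow_mem hx k) hj)
  | mul s t _ _ hs ht =>
    obtain ⟨k, hk⟩ := hs
    obtain ⟨j, hj⟩ := ht
    refine ⟨k + j, ?_⟩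
    rw [show x ^ (k + j) * (s * t) = x ^ k * s * (x ^ j * t) by ring]
    exact mul_mem hk hj

theorem isLocalizationAway_of_adjoin_insert_eq_top {T : Set S} {x u : S}
    (hx : x ∈ Algebra.adjoin K T) (hxu : x * u = 1) (htop : Algebra.adjoin K (insert u T) = ⊤) :
    IsLocalization.Away (⟨x, hx⟩ : Algebra.adjoin K T) S where
  map_units := by
    rintro ⟨_, k, rfl⟩
    exact (IsUnit.of_mul_eq_one u hxu).pow k
  surj s := by
    obtain ⟨k, hk⟩ := exists_pow_mul_mem_adjoin_of_adjoin_insert_eq_top hx hxu htop s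
    exact ⟨(⟨_, hk⟩, ⟨_, k, rfl⟩), mul_comm s (x ^ k)⟩
  exists_of_eq h := ⟨1, by rw [Subtype.coe_injective h]⟩

end CommRing

variable {K S F : Type*} [Field K] [CommRing S] [Algebra K S] [Field F] [Algebra K F]
  [Algebra S F] [IsScalarTower K S F]

theorem intermediateField_adjoin_eq_top_of_adjoin_insert_eq_top {T : Set S} {x u : S}
    (hx : x ∈ Algebra.adjoin K T) (hxu : x * u = 1) (htop : Algebra.adjoin K (insert u T) = ⊤)
    (hF : IntermediateField.adjoin K (Set.range (algebraMap S F)) = ⊤) :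
    IntermediateField.adjoin K (algebraMap S F '' T) = ⊤ := by
  let E : IntermediateField K F := IntermediateField.adjoin K (algebraMap S F '' T)
  let E' : Subalgebra K S := E.toSubalgebra.comap (IsScalarTower.toAlgHom K S F)
  have hT : T ⊆ E' := fun t ht => IntermediateField.subset_adjoin K _ ⟨t, ht, rfl⟩
  have hu : algebraMap S F u = (algebraMap S F x)⁻¹ :=
    eq_inv_of_mul_eq_one_right (by rw [← map_mul, hxu, map_one])
  have hE' : (⊤ : Subalgebra K S) ≤ E' := by
    rw [← htop, Algebra.adjoin_le_iff, Set.insert_subset_iff]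
    refine ⟨?_, hT⟩
    change algebraMap S F u ∈ E
    rw [hu]
    exact inv_mem (Algebra.adjoin_le hT hx : x ∈ E')
  rw [← top_le_iff, ← hF, IntermediateField.adjoin_le_iff]
  rintro _ ⟨s, rfl⟩
  exact hE' (Algebra.mem_top (x := s))

theorem isFractionRing_adjoin_of_intermediateField_adjoin_eq_top {T : Set S}
    [FaithfulSMul (Algebra.adjoin K T) F]
    (hT : IntermediateField.adjoin K (algebraMap S F '' T) = ⊤) :
    IsFractionRing (Algebra.adjoin K T) F := by
  have lift {r : F} (hr : r ∈ Algebra.adjoin K (algebraMap S F '' T)) :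
      ∃ t, algebraMap (Algebra.adjoin K T) F t = r := by
    obtain ⟨t, ht, rfl⟩ :=
      (AlgHom.map_adjoin (IsScalarTower.toAlgHom K S F) T).ge hr
    exact ⟨⟨t, ht⟩, rfl⟩
  refine IsFractionRing.of_field _ F fun z => ?_
  obtain ⟨r, hr, s, hs, rfl⟩ := IntermediateField.mem_adjoin_iff_div.1
    (hT ▸ IntermediateField.mem_top : z ∈ IntermediateField.adjoin K (algebraMap S F '' T))
  obtain ⟨t, rfl⟩ := lift hr
  obtain ⟨t', rfl⟩ := lift hs
  exact ⟨t, t', rfl⟩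

variable {ι : Type*}

theorem algebraicIndependent_of_intermediateField_adjoin_eq_top [Fintype ι] {v : ι → F}
    (hcard : (Fintype.card ι : Cardinal) ≤ Algebra.trdeg K F)
    (hv : IntermediateField.adjoin K (Set.range v) = ⊤) : AlgebraicIndependent K v := by
  have := isFractionRing_adjoin_of_intermediateField_adjoin_eq_top (F := F) (T := Set.range v)
    (by simpa using hv)
  have := IsLocalization.isAlgebraic F (nonZeroDivisors (Algebra.adjoin K (Set.range v)))
  refine (Algebra.IsAlgebraic.isTranscendenceBasis_of_lift_le_trdeg_of_finite K v ?_).1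
  simpa using hcard

theorem faithfulSMul_adjoin_range {v : ι → S} (hv : AlgebraicIndependent K (algebraMap S F ∘ v)) :
    FaithfulSMul (Algebra.adjoin K (Set.range v)) F := by
  rw [faithfulSMul_iff_algebraMap_injective, injective_iff_map_eq_zero]
  rintro ⟨c, hc⟩ hc0
  rw [Algebra.adjoin_range_eq_range_aeval] at hc
  obtain ⟨p, rfl⟩ := hc
  have hp : p = 0 := hv.eq_zero_of_aeval_eq_zero p (by rw [← hc0, aeval_algebraMap_apply]; rfl)
  exact Subtype.ext (by simp [hp])

theorem isIntegrallyClosedIn_of_adjoin_insert_eq_top [Fintype ι] {v : ι → S} {x u : S}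
    (hcard : (Fintype.card ι : Cardinal) ≤ Algebra.trdeg K F)
    (hx : x ∈ Algebra.adjoin K (Set.range v)) (hxu : x * u = 1)
    (htop : Algebra.adjoin K (insert u (Set.range v)) = ⊤)
    (hF : IntermediateField.adjoin K (Set.range (algebraMap S F)) = ⊤) :
    IsIntegrallyClosedIn S F := by
  have hvF := intermediateField_adjoin_eq_top_of_adjoin_insert_eq_top hx hxu htop hF
  have hv : AlgebraicIndependent K (algebraMap S F ∘ v) :=
    algebraicIndependent_of_intermediateField_adjoin_eq_top hcard (by rwa [Set.range_comp])
  have := faithfulSMul_adjoin_range hv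
  have := isFractionRing_adjoin_of_intermediateField_adjoin_eq_top hvF
  have : IsIntegrallyClosed (Algebra.adjoin K (Set.range v)) :=
    .of_equiv (hv.of_comp (IsScalarTower.toAlgHom K S F)).aevalEquiv.toRingEquiv
  have := isLocalizationAway_of_adjoin_insert_eq_top hx hxu htop
  have : IsDomain (Algebra.adjoin K (Set.range v)) :=
    (FaithfulSMul.algebraMap_injective _ F).isDomain
  let M := Submonoid.powers (⟨x, hx⟩ : Algebra.adjoin K (Set.range v))
  have : Nontrivial S := (algebraMap S F).domain_nontrivial
  have hM : M ≤ nonZeroDivisors _ := powers_le_nonZeroDivisors_of_noZeroDivisors fun h =>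
    (IsUnit.of_mul_eq_one u hxu).ne_zero (congrArg Subtype.val h)
  have := IsFractionRing.isFractionRing_of_isDomain_of_isLocalization M S F
  exact (isIntegrallyClosed_iff_isIntegrallyClosedIn F).1
    (isIntegrallyClosed_of_isLocalization S M hM)

end LocalizedPolynomialRing

section AwayGenerators

variable {K B : Type*} [Field K] [CommRing B] [Algebra K B] {σ : Type*} [Fintype σ]

variable (K) in
/-- The localization of `B` at `x = ∏ i, X i` is generated as a `K`-algebra by `x⁻¹`, the `X i` and
a further family of elements indexed by `τ`. -/
def HasAwayGenerators (X : σ → B) (τ : Type*) : Prop :=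
  ∃ extra : τ → Localization.Away (∏ i, X i),
    Algebra.adjoin K (insert (IsLocalization.Away.invSelf (∏ i, X i))
      (Set.range (fun i => algebraMap B (Localization.Away (∏ i, X i)) (X i)) ∪
        Set.range extra)) = ⊤

variable {τ : Type*} [Fintype τ] {F : Type*} [Field F] [Algebra K F] [Algebra B F]
  [IsScalarTower K B F]

theorem HasAwayGenerators.isIntegrallyClosedIn {X : σ → B} (hX : HasAwayGenerators K X τ)
    (hcard : (Fintype.card σ + Fintype.card τ : Cardinal) ≤ Algebra.trdeg K F)
    (hF : IntermediateField.adjoin K (Set.range (algebraMap B F)) = ⊤)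
    [Algebra (Localization.Away (∏ i, X i)) F]
    [IsScalarTower B (Localization.Away (∏ i, X i)) F] :
    IsIntegrallyClosedIn (Localization.Away (∏ i, X i)) F := by
  obtain ⟨extra, hextra⟩ := hX
  have : IsScalarTower K (Localization.Away (∏ i, X i)) F := .to₁₃₄ K B _ F
  let v : σ ⊕ τ → Localization.Away (∏ i, X i) := Sum.elim (fun i => algebraMap B _ (X i)) extra
  refine isIntegrallyClosedIn_of_adjoin_insert_eq_top (v := v) (by simpa using hcard) ?_
    (IsLocalization.Away.mul_invSelf (∏ i, X i)) (by rwa [Set.Sum.elim_range]) ?_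
  · rw [map_prod]
    exact prod_mem fun i _ => Algebra.subset_adjoin ⟨.inl i, rfl⟩
  · rw [← top_le_iff, ← hF]
    refine IntermediateField.adjoin.mono K _ _ ?_
    rintro _ ⟨b, rfl⟩
    exact ⟨algebraMap B _ b, (IsScalarTower.algebraMap_apply B _ F b).symm⟩

theorem isIntegrallyClosedIn_of_hasAwayGenerators {X : σ → B} {Y : τ → B}
    (hX : ∀ i, X i ∈ nonZeroDivisors B) (hXY : ∀ i j, Y j ∈ regularModulo (X i))
    (hind : AlgebraicIndependent K (algebraMap B F ∘ Sum.elim X Y))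
    (hF : IntermediateField.adjoin K (Set.range (algebraMap B F)) = ⊤)
    (hBX : HasAwayGenerators K X τ) (hBY : HasAwayGenerators K Y σ) :
    IsIntegrallyClosedIn B F := by
  have hcard : (Fintype.card σ + Fintype.card τ : Cardinal) ≤ Algebra.trdeg K F := by
    simpa [← Nat.cast_add] using hind.lift_cardinalMk_le_trdeg
  have hX0 : IsUnit (algebraMap B F (∏ i, X i)) := by
    rw [map_prod, isUnit_iff_ne_zero]
    exact Finset.prod_ne_zero_iff.2 fun i _ => hind.ne_zero (.inl i)
  have hY0 : IsUnit (algebraMap B F (∏ j, Y j)) := by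
    rw [map_prod, isUnit_iff_ne_zero]
    exact Finset.prod_ne_zero_iff.2 fun j _ => hind.ne_zero (.inr j)
  let _ := (IsLocalization.Away.lift (S := Localization.Away (∏ i, X i)) _ hX0).toAlgebra
  let _ := (IsLocalization.Away.lift (S := Localization.Away (∏ j, Y j)) _ hY0).toAlgebra
  have : IsScalarTower B (Localization.Away (∏ i, X i)) F :=
    .of_algebraMap_eq fun b => (IsLocalization.Away.lift_eq _ hX0 b).symm
  have : IsScalarTower B (Localization.Away (∏ j, Y j)) F :=
    .of_algebraMap_eq fun b => (IsLocalization.Away.lift_eq _ hY0 b).symm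
  have := hBX.isIntegrallyClosedIn hcard hF
  have := hBY.isIntegrallyClosedIn (by rwa [add_comm]) hF
  exact isIntegrallyClosedIn_of_isLocalizationAway (Localization.Away (∏ i, X i))
    (Localization.Away (∏ j, Y j)) (x := ∏ i, X i) (y := ∏ j, Y j) (prod_mem fun i _ => hX i)
    (mem_regularModulo_prod (fun i _ => hX i) fun i _ => prod_mem fun j _ => hXY i j)

end AwayGenerators

section Presentation

theorem isIntegral_of_isIntegral_adjoin {K B A : Type*} [CommRing K] [CommRing B] [CommRing A]
    [Algebra K B] [Algebra K A] [Algebra B A] [IsScalarTower K B A] {T : Set A}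
    (hT : ∀ t ∈ T, IsIntegral B t) (hA : Algebra.IsIntegral (Algebra.adjoin K T) A) :
    Algebra.IsIntegral B A := by
  have hle : Algebra.adjoin K T ≤ (integralClosure B A).restrictScalars K :=
    Algebra.adjoin_le hT
  have a_integral (a : A) : IsIntegral (integralClosure B A) a :=
    (hA.isIntegral a).map_of_comp_eq (Subalgebra.inclusion hle).toRingHom (RingHom.id A) rfl
  exact ⟨fun a => isIntegral_trans a (a_integral a)⟩

theorem adjoin_eq_top_and_ker_eq_of_bijective_lift {K A ι : Type*} [CommRing K] [CommRing A]
    [Algebra K A] {e : ι → A} {I : Ideal (MvPolynomial ι K)}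
    (hI : ∀ p ∈ I, (aeval e : MvPolynomial ι K →ₐ[K] A) p = 0)
    (h : Function.Bijective (Ideal.Quotient.liftₐ I (aeval e) hI)) :
    Algebra.adjoin K (Set.range e) = ⊤ ∧
      RingHom.ker (aeval e : MvPolynomial ι K →ₐ[K] A) = I := by
  refine ⟨?_, le_antisymm (fun p hp => ?_) hI⟩
  · rw [Algebra.adjoin_range_eq_range_aeval, AlgHom.range_eq_top]
    exact h.2.comp Ideal.Quotient.mk_surjective
  · exact Ideal.Quotient.eq_zero_iff_mem.1 (h.1 (hp.trans (map_zero _).symm))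

variable {K : Type*} [Field K] {A : Type*} [CommRing A] [IsDomain A] [Algebra K A]
  {σ τ κ : Type*} [Fintype σ] [Fintype τ] [Finite κ]

theorem bijective_algebraMap_of_hasAwayGenerators {B : Type*} [CommRing B] [Algebra K B]
    [Algebra B A] [IsScalarTower K B A] {X : σ → B} {Y : τ → B}
    (hX : ∀ i, X i ∈ nonZeroDivisors B) (hXY : ∀ i j, Y j ∈ regularModulo (X i))
    (hind : AlgebraicIndependent K (algebraMap B A ∘ Sum.elim X Y))
    (h_int : Algebra.IsIntegral
      (Algebra.adjoin K (Set.range (algebraMap B A ∘ Sum.elim X Y))) A)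
    (hquot : IntermediateField.adjoin K (Set.range (algebraMap B (FractionRing A))) = ⊤)
    (hBX : HasAwayGenerators K X τ) (hBY : HasAwayGenerators K Y σ) :
    Function.Bijective (algebraMap B A) := by
  have hindF : AlgebraicIndependent K (algebraMap B (FractionRing A) ∘ Sum.elim X Y) := by
    rw [IsScalarTower.algebraMap_eq B A (FractionRing A)]
    exact hind.map' (f := IsScalarTower.toAlgHom K A (FractionRing A))
      (IsFractionRing.injective A (FractionRing A))
  have : IsIntegrallyClosedIn B A :=
    AlgHom.isIntegrallyClosedIn (IsScalarTower.toAlgHom B A (FractionRing A))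
      (IsFractionRing.injective A (FractionRing A))
      (isIntegrallyClosedIn_of_hasAwayGenerators hX hXY hindF hquot hBX hBY)
  have : Algebra.IsIntegral B A := isIntegral_of_isIntegral_adjoin
    (Set.forall_mem_range.2 fun _ => isIntegral_algebraMap) h_int
  exact bijective_algebraMap_of_isIntegrallyClosedIn

theorem lemma_presentation_general {w : σ ⊕ τ ⊕ κ → ℕ} (hw : ∀ i, 0 < w i)
    {f : σ → A} {g : τ → A} {h : κ → A} (hind : AlgebraicIndependent K (Sum.elim f g))
    (h_int : Algebra.IsIntegral (Algebra.adjoin K (Set.range f ∪ Set.range g)) A)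
    (hquot : IntermediateField.adjoin K (algebraMap A (FractionRing A) ''
      (Set.range f ∪ Set.range g ∪ Set.range h)) = ⊤)
    {R : κ → MvPolynomial (σ ⊕ τ ⊕ κ) K}
    (hRker : ∀ i, aeval (Sum.elim f (Sum.elim g h)) (R i) = 0)
    (hRhom : ∀ i, ∃ e, 0 < e ∧ IsWeightedHomogeneous w (R i) e)
    (hR_int : Algebra.IsIntegral (Algebra.adjoin K (Set.range (Sum.elim (fun i => X (.inl i))
      (Sum.elim (fun j => X (.inr (.inl j))) R)))) (MvPolynomial (σ ⊕ τ ⊕ κ) K))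
    (hBx : HasAwayGenerators K
      (fun i : σ => Ideal.Quotient.mk (Ideal.span (Set.range R)) (X (.inl i))) τ)
    (hBy : HasAwayGenerators K
      (fun j : τ => Ideal.Quotient.mk (Ideal.span (Set.range R)) (X (.inr (.inl j)))) σ) :
    Algebra.adjoin K (Set.range f ∪ Set.range g ∪ Set.range h) = ⊤ ∧
      RingHom.ker (aeval (R := K) (Sum.elim f (Sum.elim g h))) = Ideal.span (Set.range R) := by
  cases nonempty_fintype κ
  have hsop := isHomogeneousParameterSystem_elim_X hw hRhom hR_int
  rw [Set.union_assoc, ← Set.Sum.elim_range g h, ← Set.Sum.elim_range] at hquot ⊢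
  rw [← Set.Sum.elim_range] at h_int
  let φ : MvPolynomial (σ ⊕ τ ⊕ κ) K →ₐ[K] A := aeval (Sum.elim f (Sum.elim g h))
  have hI : Ideal.span (Set.range R) ≤ RingHom.ker φ :=
    Ideal.span_le.2 (Set.range_subset_iff.2 hRker)
  let ψ := Ideal.Quotient.liftₐ (Ideal.span (Set.range R)) φ hI
  let _ := ψ.toRingHom.toAlgebra
  have : IsScalarTower K (MvPolynomial (σ ⊕ τ ⊕ κ) K ⧸ Ideal.span (Set.range R)) A :=
    .of_algebraMap_eq fun c => (ψ.commutes c).symm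
  have hψ (i : σ ⊕ τ ⊕ κ) : ψ (Ideal.Quotient.mk _ (X i)) = Sum.elim f (Sum.elim g h) i :=
    aeval_X _ i
  have hfg : ψ ∘ Sum.elim (fun i => Ideal.Quotient.mk _ (X (.inl i)))
      (fun j => Ideal.Quotient.mk _ (X (.inr (.inl j)))) = Sum.elim f g := by
    rw [Sum.comp_elim]
    exact congrArg₂ Sum.elim (funext fun i => hψ (.inl i)) (funext fun j => hψ (.inr (.inl j)))
  refine adjoin_eq_top_and_ker_eq_of_bijective_lift hI
    (bijective_algebraMap_of_hasAwayGenerators (fun i => hsop.mk_mem_nonZeroDivisors hw (.inl i))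
      (fun i j => hsop.mk_mem_regularModulo hw (i := .inl i) (j := .inr j) Sum.inl_ne_inr)
      (hfg ▸ hind) (hfg ▸ h_int) (top_le_iff.1 (hquot.ge.trans ?_)) hBx hBy)
  refine IntermediateField.adjoin.mono K _ _ ?_
  rintro _ ⟨_, ⟨i, rfl⟩, rfl⟩
  exact ⟨Ideal.Quotient.mk _ (X i), congrArg (algebraMap A (FractionRing A)) (hψ i)⟩

end Presentation

/-- Lemma 1.4 of the paper.  `A` is an `ℕ`-graded `K`-algebra (grading `𝒜`) which is an
integral domain; `f`, `g`, `h` are homogeneous elements of positive degrees `df`, `dg`, `dh`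
such that (i) `f, g` is a homogeneous system of parameters (algebraically independent and
`A` integral over the subalgebra they generate), (ii) `Quot(A)` is generated as a field
extension of `K` by `f, g, h`; the `R i` are homogeneous elements of the kernel of the
presentation map `φ : P = K[X,Y,Z] → A` such that (iii) `X, Y, R` is a homogeneous system
of parameters of `P` (w.r.t. the weights `df, dg, dh`) and (iv) after inverting
`x = X̄_1⋯X̄_n` (resp. `y = Ȳ_1⋯Ȳ_m`) in `B = P/(R_1,…,R_l)`, the algebra is generated by
`x⁻¹`, the `X̄_i` and `m` further elements (resp. `y⁻¹`, the `Ȳ_i` and `n` further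
elements).  Then `A = K[f,g,h]` and `ker φ` is generated by the `R i`. -/
theorem lemma_presentation
    (K : Type*) [Field K] (A : Type*) [CommRing A] [IsDomain A] [Algebra K A]
    (𝒜 : ℕ → Submodule K A) [GradedAlgebra 𝒜]
    (n m l : ℕ) (f : Fin n → A) (g : Fin m → A) (h : Fin l → A)
    (df : Fin n → ℕ) (dg : Fin m → ℕ) (dh : Fin l → ℕ)
    (hf : ∀ i, 0 < df i ∧ f i ∈ 𝒜 (df i))
    (hg : ∀ i, 0 < dg i ∧ g i ∈ 𝒜 (dg i))
    (hh : ∀ i, 0 < dh i ∧ h i ∈ 𝒜 (dh i))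
    -- (i) `f, g` form a homogeneous system of parameters of `A`:
    (hsopA₁ : AlgebraicIndependent K (Sum.elim f g))
    (hsopA₂ : ∀ a : A, IsIntegral (Algebra.adjoin K (Set.range f ∪ Set.range g)) a)
    -- (ii) the fraction field of `A` is generated over `K` by `f, g, h`:
    (hquot : ∀ z : FractionRing A,
      z ∈ IntermediateField.adjoin K
        (algebraMap A (FractionRing A) '' (Set.range f ∪ Set.range g ∪ Set.range h)))
    -- the relations `R i`: homogeneous (of positive degree, w.r.t. the grading of `P`
    -- making `φ` degree-preserving) elements of the kernel of `φ`:
    (R : Fin l → MvPolynomial (Fin n ⊕ Fin m ⊕ Fin l) K)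
    (hRker : ∀ i, (aeval (Sum.elim f (Sum.elim g h))) (R i) = 0)
    (hRhom : ∀ i, ∃ e, 0 < e ∧
      IsWeightedHomogeneous (Sum.elim df (Sum.elim dg dh)) (R i) e)
    -- (iii) `X, Y, R` form a homogeneous system of parameters of `P`:
    (hsopP₁ : AlgebraicIndependent K
      (Sum.elim (fun i : Fin n => (X (Sum.inl i) : MvPolynomial (Fin n ⊕ Fin m ⊕ Fin l) K))
        (Sum.elim (fun i : Fin m => X (Sum.inr (Sum.inl i))) R)))
    (hsopP₂ : ∀ p : MvPolynomial (Fin n ⊕ Fin m ⊕ Fin l) K,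
      IsIntegral (Algebra.adjoin K (Set.range
        (Sum.elim (fun i : Fin n => (X (Sum.inl i) : MvPolynomial (Fin n ⊕ Fin m ⊕ Fin l) K))
          (Sum.elim (fun i : Fin m => X (Sum.inr (Sum.inl i))) R)))) p)
    -- (iv) after inverting `x` (resp. `y`), `l` of the generators can be eliminated:
    (hBx : ∃ extra : Fin m → Localization.Away
        (∏ i : Fin n, (Ideal.Quotient.mk (Ideal.span (Set.range R))
          (X (Sum.inl i) : MvPolynomial (Fin n ⊕ Fin m ⊕ Fin l) K))),
      ∀ b, b ∈ Algebra.adjoin K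
        (insert (IsLocalization.Away.invSelf (S := Localization.Away
            (∏ i : Fin n, (Ideal.Quotient.mk (Ideal.span (Set.range R))
              (X (Sum.inl i) : MvPolynomial (Fin n ⊕ Fin m ⊕ Fin l) K))))
            (∏ i : Fin n, (Ideal.Quotient.mk (Ideal.span (Set.range R))
              (X (Sum.inl i) : MvPolynomial (Fin n ⊕ Fin m ⊕ Fin l) K))))
          ((Set.range fun i : Fin n => algebraMap _ _
              (Ideal.Quotient.mk (Ideal.span (Set.range R))
                (X (Sum.inl i) : MvPolynomial (Fin n ⊕ Fin m ⊕ Fin l) K))) ∪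
            Set.range extra)))
    (hBy : ∃ extra : Fin n → Localization.Away
        (∏ i : Fin m, (Ideal.Quotient.mk (Ideal.span (Set.range R))
          (X (Sum.inr (Sum.inl i)) : MvPolynomial (Fin n ⊕ Fin m ⊕ Fin l) K))),
      ∀ b, b ∈ Algebra.adjoin K
        (insert (IsLocalization.Away.invSelf (S := Localization.Away
            (∏ i : Fin m, (Ideal.Quotient.mk (Ideal.span (Set.range R))
              (X (Sum.inr (Sum.inl i)) : MvPolynomial (Fin n ⊕ Fin m ⊕ Fin l) K))))
            (∏ i : Fin m, (Ideal.Quotient.mk (Ideal.span (Set.range R))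
              (X (Sum.inr (Sum.inl i)) : MvPolynomial (Fin n ⊕ Fin m ⊕ Fin l) K))))
          ((Set.range fun i : Fin m => algebraMap _ _
              (Ideal.Quotient.mk (Ideal.span (Set.range R))
                (X (Sum.inr (Sum.inl i)) : MvPolynomial (Fin n ⊕ Fin m ⊕ Fin l) K))) ∪
            Set.range extra))) :
    (∀ a : A, a ∈ Algebra.adjoin K (Set.range f ∪ Set.range g ∪ Set.range h)) ∧
    RingHom.ker ((aeval (R := K) (Sum.elim f (Sum.elim g h))) :
        MvPolynomial (Fin n ⊕ Fin m ⊕ Fin l) K →+* A)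
      = Ideal.span (Set.range R) := by
  have hw : ∀ i, 0 < Sum.elim df (Sum.elim dg dh) i :=
    Sum.rec (fun i => (hf i).1) (Sum.rec (fun i => (hg i).1) fun i => (hh i).1)
  rw [← Algebra.eq_top_iff]
  exact lemma_presentation_general hw hsopA₁ ⟨hsopA₂⟩ (eq_top_iff.2 fun z _ => hquot z) hRker hRhom
    ⟨hsopP₂⟩ (hBx.imp fun _ => Algebra.eq_top_iff.2) (hBy.imp fun _ => Algebra.eq_top_iff.2)
end

section
/- For 1 ≤ k ≤ n and 0 ≤ i ≤ k, let d_{k,i} ∈ F_q[x_1,…,x_n] be the determinant of the k×k matrix whose rows are (x_1^{q^e},…,x_k^{q^e}) as e runs in increasing order over {0,1,…,k}\{i}. Then d_{k,i} = (∏_{j=1}^k f_j) · ( Σ_{1 ≤ j_1 < ⋯ < j_{k−i} ≤ k} ∏_{l=1}^{k−i} f̃_{j_l}^{q^{i+l−j_l}} ), where for i = k the sum on the right-hand side is interpreted as 1. -/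
open MvPolynomial

variable (F : Type) [Field F] [Fintype F] (n : ℕ)

/-- `fP F n k` is the orbit product `f_k` (1-indexed, meaningful for `1 ≤ k ≤ n`)
in `F_q[x_1,…,x_n]`. -/
noncomputable def fP (k : ℕ) : MvPolynomial (Fin n) F :=
  if h : 1 ≤ k ∧ k ≤ n then
    ∏ α : Fin (k - 1) → F,
      (X (⟨k - 1, by omega⟩ : Fin n) +
        ∑ j : Fin (k - 1), C (α j) * X (⟨j.val, by omega⟩ : Fin n))
  else 0

/-- `cP F n s t` is the Dickson-type invariant `c_{s,t}`:
the sum over strictly increasing sequences `1 ≤ j_1 < ⋯ < j_{s-t} ≤ s` (encoded as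
strictly monotone functions `Fin (s-t) → Fin s`) of `∏_l f_{j_l}^{(q-1)·q^{t+l-j_l}}`. -/
noncomputable def cP (s t : ℕ) : MvPolynomial (Fin n) F :=
  if s ≤ n then
    ∑ g ∈ Finset.univ.filter (fun g : Fin (s - t) → Fin s => ∀ a b : Fin (s - t), a < b → g a < g b),
      ∏ l : Fin (s - t),
        fP F n ((g l).val + 1) ^ ((Fintype.card F - 1) * (Fintype.card F) ^ (t + l.val - (g l).val))
  else 0

/-!
The product `L_e(y) = ∏_{v ∈ ⟨x_1, …, x_e⟩} (y + v)` is `F_q`-linear in `y` and satisfies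
`L_{e+1}(y) = L_e(y)^q - f_{e+1}^{q-1} L_e(y)`. Expanding in powers of `y`, the coefficient of
`y^(q^t)` is `(-1)^(e-t) c_{e,t}`, because splitting the increasing sequences according to whether
they reach their largest admissible value gives `c_{e+1,t} = f_{e+1}^{q-1} c_{e,t} + c_{e,t-1}^q`.
Since `L_e(x_j) = 0` for `j ≤ e` and `L_{j-1}(x_j) = f_j`, the unitriangular matrix of these
coefficients makes the `(k+1) × k` matrix of powers `x_j^(q^e)` triangular with diagonal
`f_1, …, f_k`. Bordering the latter by the unit column of index `i` turns the minor without row `i`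
into a determinant, and the elimination turns that column into `± c_{k,i}` in the last row.
-/

section StrictMonoMaps

lemma val_le_of_strictMono {m k : ℕ} {g : Fin m → Fin k} (hg : StrictMono g) (l : Fin m) :
    (g l : ℕ) ≤ k - m + l := by
  have hcard : (Finset.Ioi l).card ≤ (Finset.Ioi (g l)).card :=
    Finset.card_le_card_of_injOn g (fun a ha => by simpa using hg (by simpa using ha))
      hg.injective.injOn
  rw [Fin.card_Ioi, Fin.card_Ioi] at hcard
  omega

lemma filter_strictMono_eq_empty {m k : ℕ} (h : k < m) :
    ({g : Fin m → Fin k | StrictMono g} : Finset (Fin m → Fin k)) = ∅ := by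
  refine Finset.filter_eq_empty_iff.2 fun g _ hg => h.not_ge ?_
  simpa using Fintype.card_le_of_injective g hg.injective

lemma strictMono_snoc_iff {α : Type*} [Preorder α] {m : ℕ} {g : Fin m → α} {a : α} :
    StrictMono (Fin.snoc g a : Fin (m + 1) → α) ↔ StrictMono g ∧ ∀ l, g l < a := by
  rw [← Fin.insertNth_last', Fin.strictMono_insertNth_iff]
  simp [Fin.castSucc_lt_last]

lemma filter_strictMono_succ (m k : ℕ) :
    ({g : Fin (m + 1) → Fin (k + 1) | StrictMono g} : Finset (Fin (m + 1) → Fin (k + 1))) =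
      ({g : Fin m → Fin k | StrictMono g} : Finset (Fin m → Fin k)).image
          (fun g => Fin.snoc (Fin.castSucc ∘ g) (Fin.last k)) ∪
        ({g : Fin (m + 1) → Fin k | StrictMono g} : Finset (Fin (m + 1) → Fin k)).image
          (Fin.castSucc ∘ ·) := by
  ext g
  simp only [Finset.mem_union, Finset.mem_image, Finset.mem_filter_univ]
  constructor
  · intro hg
    by_cases hlast : g (Fin.last m) = Fin.last k
    · have hlt (l : Fin m) : g l.castSucc ≠ Fin.last k :=
        (hlast ▸ hg (Fin.castSucc_lt_last l)).ne
      refine .inl ⟨fun l => (g l.castSucc).castPred (hlt l), fun a b hab => ?_, ?_⟩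
      · exact Fin.castPred_lt_castPred_iff.2 (hg (Fin.castSucc_lt_castSucc_iff.2 hab))
      · funext l
        cases l using Fin.lastCases <;> simp [hlast]
    · have hlt (l : Fin (m + 1)) : g l ≠ Fin.last k :=
        ((hg.monotone (Fin.le_last l)).trans_lt (Fin.lt_last_iff_ne_last.2 hlast)).ne
      exact .inr ⟨fun l => (g l).castPred (hlt l),
        fun a b hab => Fin.castPred_lt_castPred_iff.2 (hg hab), by funext l; simp⟩
  · rintro (⟨h, hh, rfl⟩ | ⟨h, hh, rfl⟩)
    · exact strictMono_snoc_iff.2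
        ⟨Fin.strictMono_castSucc.comp hh, fun l => Fin.castSucc_lt_last (h l)⟩
    · exact Fin.strictMono_castSucc.comp hh

theorem sum_strictMono_succ {R : Type*} [CommSemiring R] (w : ℕ → ℕ → R) (m k : ℕ) :
    ∑ g : Fin (m + 1) → Fin (k + 1) with StrictMono g, ∏ l : Fin (m + 1), w l (g l) =
      (∑ g : Fin m → Fin k with StrictMono g, ∏ l : Fin m, w l (g l)) * w m k +
        ∑ g : Fin (m + 1) → Fin k with StrictMono g, ∏ l : Fin (m + 1), w l (g l) := by
  rw [filter_strictMono_succ, Finset.sum_union, Finset.sum_image, Finset.sum_image, Finset.sum_mul]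
  · simp [Fin.prod_univ_castSucc]
  · exact (Fin.castSucc_injective k).comp_left.injOn
  · intro g _ h _ hgh
    exact (Fin.castSucc_injective k).comp_left (Fin.snoc_injective2 hgh).1
  · simp only [Finset.disjoint_left, Finset.mem_image, not_exists, not_and]
    rintro _ ⟨g, -, rfl⟩ h - hh
    exact (Fin.castSucc_lt_last (h (Fin.last m))).ne (by simpa using congrFun hh (Fin.last m))

end StrictMonoMaps

section DicksonCoeff

variable {R : Type*} [CommSemiring R] (q : ℕ) (f : ℕ → R)

/-- The Dickson coefficient `c_{k,k-m}`, written as a sum over strictly increasing sequences of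
length `m`. Indexing by the length makes it vanish for `m > k`, where no such sequence exists; the
subtraction of `g l` never truncates, by `val_le_of_strictMono`. -/
def dicksonCoeff (k m : ℕ) : R :=
  ∑ g : Fin m → Fin k with StrictMono g,
    ∏ l : Fin m, f (g l) ^ ((q - 1) * q ^ (k - m + l - g l))

lemma dicksonCoeff_zero_right (k : ℕ) : dicksonCoeff q f k 0 = 1 := by
  simp [dicksonCoeff, Finset.filter_true_of_mem, Subsingleton.strictMono]

lemma dicksonCoeff_of_lt {k m : ℕ} (h : k < m) : dicksonCoeff q f k m = 0 := by
  rw [dicksonCoeff, filter_strictMono_eq_empty h, Finset.sum_empty]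

end DicksonCoeff

section BorderedMinors

variable {R : Type*} [CommRing R] {k : ℕ}

lemma det_snoc_single (A : Matrix (Fin (k + 1)) (Fin k) R) (i : Fin (k + 1)) :
    Matrix.det (Matrix.of fun e => Fin.snoc (A e) ((Pi.single i 1 : Fin (k + 1) → R) e)) =
      (-1) ^ (i + k : ℕ) * (A.submatrix i.succAbove id).det := by
  rw [Matrix.det_succ_column _ (Fin.last k), Fintype.sum_eq_single i (by simp +contextual)]
  congr 1
  · simp
  · congr 1
    ext r s
    simp

theorem det_submatrix_succAbove_of_triangular (A : Matrix (Fin (k + 1)) (Fin k) R)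
    {S : Matrix (Fin (k + 1)) (Fin (k + 1)) R} (hS : S.IsLowerTriangular)
    (hS_diag : ∀ e, S e e = 1) (hSA : ∀ e j, j.castSucc < e → (S * A) e j = 0)
    (i : Fin (k + 1)) :
    (A.submatrix i.succAbove id).det =
      (-1) ^ (i + k : ℕ) * S (Fin.last k) i * ∏ j, (S * A) j.castSucc j := by
  set B : Matrix (Fin (k + 1)) (Fin (k + 1)) R :=
    Matrix.of fun e => Fin.snoc (A e) ((Pi.single i 1 : Fin (k + 1) → R) e) with hB
  have hSB_castSucc (e : Fin (k + 1)) (j : Fin k) : (S * B) e j.castSucc = (S * A) e j := by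
    simp [Matrix.mul_apply, hB]
  have hSB_last (e : Fin (k + 1)) : (S * B) e (Fin.last k) = S e i := by
    simp [Matrix.mul_apply, hB, Pi.single_apply]
  have hSB : (S * B).IsUpperTriangular := by
    intro e t hte
    cases t using Fin.lastCases with
    | last => exact absurd hte (Fin.le_last e).not_gt
    | cast j => rw [hSB_castSucc, hSA e j hte]
  have hdet : (-1) ^ (i + k : ℕ) * (A.submatrix i.succAbove id).det =
      (∏ j, (S * A) j.castSucc j) * S (Fin.last k) i := calc
    _ = S.det * B.det := by
      rw [Matrix.det_of_isLowerTriangular S hS, Finset.prod_congr rfl fun e _ => hS_diag e,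
        Finset.prod_const_one, one_mul, hB, det_snoc_single]
    _ = _ := by
      rw [← Matrix.det_mul, Matrix.det_of_isUpperTriangular hSB, Fin.prod_univ_castSucc]
      simp only [hSB_castSucc, hSB_last]
  have hsign : (-1 : R) ^ (i + k : ℕ) * (-1) ^ (i + k : ℕ) = 1 := by
    rw [← mul_pow, neg_one_mul, neg_neg, one_pow]
  linear_combination (-1) ^ (i + k : ℕ) * hdet - (A.submatrix i.succAbove id).det * hsign

end BorderedMinors

section FiniteFieldAlgebra

variable (K : Type*) [Field K] [Fintype K] {R : Type*} [CommRing R] [Algebra K R]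

local notation "q" => Fintype.card K

lemma prod_X_sub_C_univ :
    ∏ c : K, (Polynomial.X - Polynomial.C c) = Polynomial.X ^ q - Polynomial.X := by
  have hq : 1 < q := Fintype.one_lt_card
  have hmonic : (Polynomial.X ^ q - Polynomial.X : Polynomial K).Monic :=
    Polynomial.monic_X_pow_sub (by rwa [Polynomial.degree_X, Nat.one_lt_cast])
  have hroots := FiniteField.roots_X_pow_card_sub_X K
  have hcard : (Polynomial.X ^ q - Polynomial.X : Polynomial K).roots.card =
      (Polynomial.X ^ q - Polynomial.X : Polynomial K).natDegree := by
    rw [hroots, FiniteField.X_pow_card_sub_X_natDegree_eq K hq, Finset.card_val, Finset.card_univ]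
  rw [← Polynomial.prod_multiset_X_sub_C_of_monic_of_roots_card_eq hmonic hcard, hroots]
  rfl

-- Homogenizing `∏ (X - c) = X ^ q - X` makes the identity available without dividing by `b`.
theorem prod_add_smul_univ (a b : R) : ∏ c : K, (a + c • b) = a ^ q - b ^ (q - 1) * a := by
  have hhom : (Polynomial.X ^ q - Polynomial.X : Polynomial K).homogenize q =
      ∏ c : K, (Polynomial.X - Polynomial.C c).homogenize 1 := by
    have hprod := Polynomial.homogenize_finsetProd (s := (Finset.univ : Finset K))
      (n := fun _ => 1) fun c _ => (Polynomial.natDegree_X_sub_C c).le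
    rwa [Finset.sum_const, Finset.card_univ, smul_eq_mul, mul_one, prod_X_sub_C_univ] at hprod
  have heval := congrArg (MvPolynomial.aeval ![a, b]) hhom
  rw [Polynomial.homogenize_sub, Polynomial.homogenize_X_pow le_rfl,
    Polynomial.homogenize_X Fintype.card_ne_zero] at heval
  rw [← Equiv.prod_comp (Equiv.neg K)]
  simpa [Algebra.smul_def, sub_eq_add_neg, mul_comm, Polynomial.homogenize_X,
    Polynomial.homogenize_C] using heval.symm

variable {K} in
lemma sum_pow_card {ι : Type*} (s : Finset ι) (a : ι → R) :
    (∑ j ∈ s, a j) ^ q = ∑ j ∈ s, a j ^ q :=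
  map_sum (FiniteField.frobeniusAlgHom K R) a s

/-- The orbit product `f_{j+1}` attached to a sequence `x` (0-indexed, so that `x j` stands for
`x_{j+1}`) with entries in any commutative algebra over the finite field `K`. -/
def orbitProd (x : ℕ → R) (j : ℕ) : R :=
  ∏ α : Fin j → K, (x j + ∑ l : Fin j, α l • x l)

/-- The `K`-linear map `y ↦ ∏_{v ∈ ⟨x_1, …, x_e⟩} (y + v)` of Dickson and Moore, defined through
its recursion in `e` so that linearity is built in. -/
def vanishingMap (x : ℕ → R) : ℕ → R →ₗ[K] R
  | 0 => LinearMap.id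
  | e + 1 => (FiniteField.frobeniusAlgHom K R).toLinearMap ∘ₗ vanishingMap x e -
      vanishingMap x e (x e) ^ (q - 1) • vanishingMap x e

lemma vanishingMap_succ_apply (x : ℕ → R) (e : ℕ) (y : R) :
    vanishingMap K x (e + 1) y =
      vanishingMap K x e y ^ q - vanishingMap K x e (x e) ^ (q - 1) * vanishingMap K x e y := rfl

theorem vanishingMap_eq_prod (x : ℕ → R) (e : ℕ) (y : R) :
    vanishingMap K x e y = ∏ α : Fin e → K, (y + ∑ j : Fin e, α j • x j) := by
  induction e generalizing y with
  | zero => simp [vanishingMap]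
  | succ e ih =>
    rw [vanishingMap_succ_apply, ← prod_add_smul_univ,
      ← Equiv.prod_comp (Fin.snocEquiv fun _ => K), Fintype.prod_prod_type]
    refine Finset.prod_congr rfl fun c _ => ?_
    rw [← map_smul, ← map_add, ih]
    refine Finset.prod_congr rfl fun α _ => ?_
    simp [Fin.snocEquiv, Fin.sum_univ_castSucc, add_assoc, add_comm (c • x e)]

lemma vanishingMap_self (x : ℕ → R) (j : ℕ) : vanishingMap K x j (x j) = orbitProd K x j :=
  vanishingMap_eq_prod K x j (x j)

lemma vanishingMap_apply_of_lt (x : ℕ → R) {j e : ℕ} (h : j < e) :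
    vanishingMap K x e (x j) = 0 := by
  induction e, h using Nat.le_induction with
  | base => rw [vanishingMap_succ_apply, pow_sub_one_mul Fintype.card_ne_zero, sub_self]
  | succ e _ ih =>
    rw [vanishingMap_succ_apply, ih, zero_pow Fintype.card_ne_zero, mul_zero, sub_zero]

lemma dicksonCoeff_succ_pow_card (f : ℕ → R) (k m : ℕ) :
    dicksonCoeff q f k (m + 1) ^ q =
      ∑ g : Fin (m + 1) → Fin k with StrictMono g,
        ∏ l : Fin (m + 1), f (g l) ^ ((q - 1) * q ^ (k - m + l - g l)) := by
  rcases le_or_gt k m with hkm | hmk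
  · have hlt : k < m + 1 := Nat.lt_succ_of_le hkm
    rw [dicksonCoeff_of_lt q f hlt, filter_strictMono_eq_empty hlt, Finset.sum_empty,
      zero_pow Fintype.card_ne_zero]
  · rw [dicksonCoeff, sum_pow_card]
    refine Finset.sum_congr rfl fun g hg => ?_
    rw [← Finset.prod_pow]
    refine Finset.prod_congr rfl fun l _ => ?_
    have hgl : (g l : ℕ) ≤ k - (m + 1) + l := val_le_of_strictMono (by simpa using hg) l
    have hexp : k - m + l - g l = k - (m + 1) + l - g l + 1 := by omega
    rw [hexp, pow_succ q, ← mul_assoc, pow_mul _ _ q]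

theorem dicksonCoeff_succ_succ (f : ℕ → R) (k m : ℕ) :
    dicksonCoeff q f (k + 1) (m + 1) =
      f k ^ (q - 1) * dicksonCoeff q f k m + dicksonCoeff q f k (m + 1) ^ q := by
  have hsplit := sum_strictMono_succ (fun l j => f j ^ ((q - 1) * q ^ (k - m + l - j))) m k
  rw [← dicksonCoeff_succ_pow_card, ← dicksonCoeff] at hsplit
  rw [dicksonCoeff, Nat.add_sub_add_right, hsplit, mul_comm]
  rcases le_or_gt m k with hmk | hkm
  · rw [Nat.sub_add_cancel hmk, Nat.sub_self, pow_zero, mul_one]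
  · rw [dicksonCoeff_of_lt q f hkm, mul_zero, mul_zero]

theorem vanishingMap_eq_sum (x : ℕ → R) (e : ℕ) (y : R) :
    vanishingMap K x e y = ∑ m ∈ Finset.range (e + 1),
      (-1) ^ m * dicksonCoeff q (orbitProd K x) e m * y ^ q ^ (e - m) := by
  induction e with
  | zero => simp [vanishingMap, dicksonCoeff_zero_right]
  | succ e ih =>
    set c := dicksonCoeff q (orbitProd K x)
    have hneg (m : ℕ) : ((-1 : R) ^ m) ^ q = (-1) ^ m := by
      have := map_neg (FiniteField.frobeniusAlgHom K R) 1
      rw [map_one, FiniteField.frobeniusAlgHom_apply] at this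
      rw [pow_right_comm, this]
    have hpow : vanishingMap K x e y ^ q =
        ∑ m ∈ Finset.range (e + 1), (-1) ^ (m + 1) * c e (m + 1) ^ q * y ^ q ^ (e - m) +
          y ^ q ^ (e + 1) := calc
      _ = ∑ m ∈ Finset.range (e + 1), (-1) ^ m * c e m ^ q * y ^ q ^ (e + 1 - m) := by
        rw [ih, sum_pow_card]
        refine Finset.sum_congr rfl fun m hm => ?_
        rw [mul_pow, mul_pow, hneg, ← pow_mul, ← pow_succ,
          Nat.succ_sub (Finset.mem_range_succ_iff.1 hm)]
      _ = ∑ m ∈ Finset.range (e + 2), (-1) ^ m * c e m ^ q * y ^ q ^ (e + 1 - m) := by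
        rw [Finset.sum_range_succ _ (e + 1)]
        simp [c, dicksonCoeff_of_lt]
      _ = _ := by
        rw [Finset.sum_range_succ']
        simp [c, dicksonCoeff_zero_right]
    rw [vanishingMap_succ_apply, vanishingMap_self, hpow, ih, Finset.sum_range_succ' _ (e + 1),
      Finset.mul_sum, add_sub_right_comm, ← Finset.sum_sub_distrib]
    congr 1
    · refine Finset.sum_congr rfl fun m _ => ?_
      rw [show c (e + 1) (m + 1) = _ from dicksonCoeff_succ_succ K _ e m, Nat.add_sub_add_right]
      ring
    · simp [c, dicksonCoeff_zero_right]

/-- The coefficient of `y ^ q ^ t` in the additive polynomial `vanishingMap K x e y`. -/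
def vanishingCoeff (x : ℕ → R) (e t : ℕ) : R :=
  if t ≤ e then (-1) ^ (e - t) * dicksonCoeff q (orbitProd K x) e (e - t) else 0

lemma vanishingMap_eq_sum_vanishingCoeff (x : ℕ → R) {e k : ℕ} (h : e ≤ k) (y : R) :
    vanishingMap K x e y = ∑ t : Fin (k + 1), vanishingCoeff K x e t * y ^ q ^ (t : ℕ) := calc
  _ = ∑ t ∈ Finset.range (e + 1), vanishingCoeff K x e t * y ^ q ^ t := by
    rw [vanishingMap_eq_sum, ← Finset.sum_flip]
    refine Finset.sum_congr rfl fun t ht => ?_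
    have hte : t ≤ e := Finset.mem_range_succ_iff.1 ht
    rw [vanishingCoeff, if_pos hte, Nat.sub_sub_self hte]
  _ = ∑ t ∈ Finset.range (k + 1), vanishingCoeff K x e t * y ^ q ^ t := by
    refine Finset.sum_subset (Finset.range_mono (Nat.succ_le_succ h)) fun t _ hte => ?_
    rw [vanishingCoeff, if_neg (mt Finset.mem_range_succ_iff.2 hte), zero_mul]
  _ = _ := Finset.sum_range _

theorem det_pow_succAbove (x : ℕ → R) {k : ℕ} (i : Fin (k + 1)) :
    (Matrix.of fun r s : Fin k => x s ^ q ^ (i.succAbove r : ℕ)).det =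
      (∏ j : Fin k, orbitProd K x j) * dicksonCoeff q (orbitProd K x) k (k - i) := by
  set A : Matrix (Fin (k + 1)) (Fin k) R := Matrix.of fun e s => x s ^ q ^ (e : ℕ)
  set S : Matrix (Fin (k + 1)) (Fin (k + 1)) R := Matrix.of fun e t => vanishingCoeff K x e t
  have hSA (e : Fin (k + 1)) (j : Fin k) : (S * A) e j = vanishingMap K x e (x j) := by
    rw [vanishingMap_eq_sum_vanishingCoeff K x (Nat.le_of_lt_succ e.isLt), Matrix.mul_apply]
    rfl
  have hS : S.IsLowerTriangular := fun e t het => if_neg (not_le.2 het)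
  have hS_diag (e : Fin (k + 1)) : S e e = 1 := by
    simp [S, vanishingCoeff, dicksonCoeff_zero_right]
  have hS_last : (-1) ^ (i + k : ℕ) * S (Fin.last k) i =
      dicksonCoeff q (orbitProd K x) k (k - i) := by
    have hik : (i : ℕ) ≤ k := Nat.le_of_lt_succ i.isLt
    have hsign : (-1 : R) ^ (i + k : ℕ) * (-1) ^ (k - i : ℕ) = 1 := by
      rw [← pow_add, Even.neg_one_pow ⟨k, by omega⟩]
    simp only [S, Matrix.of_apply, vanishingCoeff, Fin.val_last, if_pos hik]
    rw [← mul_assoc, hsign, one_mul]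
  calc
    _ = (A.submatrix i.succAbove id).det := rfl
    _ = (-1) ^ (i + k : ℕ) * S (Fin.last k) i * ∏ j : Fin k, (S * A) j.castSucc j :=
      det_submatrix_succAbove_of_triangular A hS hS_diag
        (fun e j h => (hSA e j).trans (vanishingMap_apply_of_lt K x h)) i
    _ = _ := by
      rw [hS_last, mul_comm]
      simp only [hSA, Fin.val_castSucc, vanishingMap_self]

theorem det_d_eq_general (x : ℕ → R) {k i : ℕ} (hi : i ≤ k) :
    (Matrix.of fun r s : Fin k => x s ^ q ^ (if r.val < i then r.val else r.val + 1)).det =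
      (∏ j : Fin k, orbitProd K x j) *
        ∑ g : Fin (k - i) → Fin k with StrictMono g,
          ∏ l : Fin (k - i), orbitProd K x (g l) ^ ((q - 1) * q ^ (i + l - g l)) := by
  have hminor := det_pow_succAbove K x (⟨i, Nat.lt_succ_of_le hi⟩ : Fin (k + 1))
  simpa [dicksonCoeff, Nat.sub_sub_self hi, Fin.succAbove, Fin.lt_def, apply_ite Fin.val]
    using hminor

end FiniteFieldAlgebra

lemma extend_X_apply {A : Type*} [CommSemiring A] {m s : ℕ} (hs : s < m) :
    Function.extend Fin.val X (0 : ℕ → MvPolynomial (Fin m) A) s = X ⟨s, hs⟩ :=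
  Fin.val_injective.extend_apply X 0 ⟨s, hs⟩

lemma fP_succ {j : ℕ} (hj : j < n) :
    fP F n (j + 1) = orbitProd F (Function.extend Fin.val X 0) j := by
  rw [fP, dif_pos ⟨Nat.le_add_left 1 j, hj⟩, orbitProd, extend_X_apply hj]
  refine Finset.prod_congr rfl fun α _ => ?_
  congr 1
  refine Finset.sum_congr rfl fun l _ => ?_
  rw [extend_X_apply (l.isLt.trans hj), smul_eq_C_mul]

lemma prod_Icc_one_fP {k : ℕ} (hk : k ≤ n) :
    ∏ j ∈ Finset.Icc 1 k, fP F n j =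
      ∏ j : Fin k, orbitProd F (Function.extend Fin.val X 0) j := by
  rw [← Finset.Ico_add_one_right_eq_Icc, ← zero_add 1, ← Finset.prod_Ico_add',
    ← Finset.range_eq_Ico, ← Fin.prod_univ_eq_prod_range (fun j => fP F n (j + 1))]
  exact Finset.prod_congr rfl fun j _ => fP_succ F n (j.isLt.trans_le hk)

/-- Lemma 2.3: the determinant `d_{k,i}` in terms of the invariants `f_j` and `f̃_j = f_j^{q-1}`. -/
theorem det_d_eq (k i : ℕ) (hk1 : 1 ≤ k) (hk2 : k ≤ n) (hi : i ≤ k) :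
    (Matrix.of fun r s : Fin k =>
        X (⟨s.val, lt_of_lt_of_le s.isLt hk2⟩ : Fin n) ^
          (Fintype.card F) ^ (if r.val < i then r.val else r.val + 1)).det
    = (∏ j ∈ Finset.Icc 1 k, fP F n j) *
      ∑ g ∈ Finset.univ.filter (fun g : Fin (k - i) → Fin k => ∀ a b : Fin (k - i), a < b → g a < g b),
        ∏ l : Fin (k - i),
          fP F n ((g l).val + 1) ^
            ((Fintype.card F - 1) * (Fintype.card F) ^ (i + l.val - (g l).val)) := by
  have hdet := det_d_eq_general F (Function.extend Fin.val X (0 : ℕ → MvPolynomial (Fin n) F)) hi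
  simp only [fun s : Fin k => extend_X_apply (A := F) (s.isLt.trans_le hk2)] at hdet
  simp only [prod_Icc_one_fP F n hk2, fun j : Fin k => fP_succ F n (j.isLt.trans_le hk2)]
  exact hdet
end
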